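/- arXiv:2501.06506 — 10 statements merged into one kernel-verified Lean document; each statement's English description precedes it below -/
import Mathlib

section
/- Let m ≥ 1, let v_1 ≥ v_2 ≥ … ≥ v_m ≥ 0 be real numbers, and let x_1, …, x_m ∈ [0,1] be real numbers with ∑_{ℓ=1}^m x_ℓ = 1. Then ∑_{ℓ=1}^m v_ℓ · x_ℓ · ∏_{t=1}^{ℓ-1}(1 − x_t) ≥ (1 − 1/e) · ∑_{ℓ=1}^m v_ℓ x_ℓ. -/
/-!
Write `c = 1 - 1/e` and `d l = x l * ∏ t < l, (1 - x t) - c * x l`; the claim is `0 ≤ ∑ v l * d l`.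
As `v` is nonincreasing and nonnegative, summation by parts (`abel_lower_bound`) reduces this to
nonnegativity of the partial sums of `d`. The products telescope, so with `s = ∑ l < k, x l ∈ [0, 1]`
the `k`-th partial sum is `1 - ∏ t < k, (1 - x t) - c * s`. It is nonnegative because
`∏ (1 - x t) ≤ exp (-s)` and, by convexity of `exp` (`exp_neg_le_chord`), `exp (-s) ≤ 1 - c * s`.
-/

/-- On `[0, 1]` the convex function `s ↦ exp (-s)` lies below its chord. -/
lemma exp_neg_le_chord {s : ℝ} (h0 : 0 ≤ s) (h1 : s ≤ 1) :
    Real.exp (-s) ≤ 1 - (1 - 1 / Real.exp 1) * s := by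
  have h := convexOn_exp.2 (Set.mem_univ (0 : ℝ)) (Set.mem_univ (-1 : ℝ))
    (sub_nonneg.2 h1) h0 (by ring)
  simp only [smul_eq_mul, mul_zero, zero_add, mul_neg, mul_one, Real.exp_zero] at h
  rw [Real.exp_neg 1] at h
  rw [one_div]
  linarith

lemma sum_mul_prod_one_sub (x : ℕ → ℝ) (k : ℕ) :
    ∑ l ∈ Finset.range k, x l * ∏ t ∈ Finset.range l, (1 - x t)
      = 1 - ∏ t ∈ Finset.range k, (1 - x t) := by
  induction k with
  | zero => simp
  | succ k ih => rw [Finset.sum_range_succ, Finset.prod_range_succ, ih]; ring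

/-- Summation by parts: a nonincreasing weight `v` on a sequence `d` with nonnegative partial sums
gives at least the last weight times the total of `d`. -/
lemma abel_lower_bound (m : ℕ) (v d : ℕ → ℝ)
    (hmono : ∀ k l, k ≤ l → l < m → v l ≤ v k)
    (hd : ∀ k, k ≤ m → 0 ≤ ∑ l ∈ Finset.range k, d l) (k : ℕ) (hk : k < m) :
    v k * ∑ l ∈ Finset.range (k + 1), d l ≤ ∑ l ∈ Finset.range (k + 1), v l * d l := by
  induction k with
  | zero => simp
  | succ k ih =>
    rw [Finset.sum_range_succ d, Finset.sum_range_succ (fun l => v l * d l)]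
    have h1 := ih (by omega)
    have h2 := mul_le_mul_of_nonneg_right (hmono k (k + 1) (by omega) hk) (hd (k + 1) hk.le)
    linarith

/-- Core rounding inequality. Indices are 0-based: `v l`, `x l` for
`l = 0, …, m-1` correspond to `v_{l+1}, x_{l+1}` in the paper, and
`∏ t ∈ Finset.range l, (1 - x t)` is the product `∏_{t=1}^{ℓ-1} (1 - x_t)`
(the empty product for `l = 0`). -/
theorem stmt_0 (m : ℕ) (hm : 1 ≤ m) (v x : ℕ → ℝ)
    (hmono : ∀ k l, k ≤ l → l < m → v l ≤ v k)
    (hvnn : ∀ l, l < m → 0 ≤ v l)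
    (hx0 : ∀ l, l < m → 0 ≤ x l) (hx1 : ∀ l, l < m → x l ≤ 1)
    (hsum : ∑ l ∈ Finset.range m, x l = 1) :
    ∑ l ∈ Finset.range m, v l * x l * ∏ t ∈ Finset.range l, (1 - x t)
      ≥ (1 - 1 / Real.exp 1) * ∑ l ∈ Finset.range m, v l * x l := by
  have hpart : ∀ k, k ≤ m → 0 ≤ ∑ l ∈ Finset.range k,
      (x l * ∏ t ∈ Finset.range l, (1 - x t) - (1 - 1 / Real.exp 1) * x l) := by
    intro k hk
    have hlt : ∀ l ∈ Finset.range k, l < m := fun l hl => (Finset.mem_range.1 hl).trans_le hk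
    rw [Finset.sum_sub_distrib, sum_mul_prod_one_sub, ← Finset.mul_sum]
    have hs0 : 0 ≤ ∑ l ∈ Finset.range k, x l :=
      Finset.sum_nonneg fun l hl => hx0 l (hlt l hl)
    have hs1 : ∑ l ∈ Finset.range k, x l ≤ 1 := by
      rw [← hsum]
      exact Finset.sum_le_sum_of_subset_of_nonneg (Finset.range_mono hk)
        fun l hl _ => hx0 l (Finset.mem_range.1 hl)
    have hP : ∏ t ∈ Finset.range k, (1 - x t) ≤ Real.exp (-∑ l ∈ Finset.range k, x l) := by
      rw [← Finset.sum_neg_distrib, Real.exp_sum]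
      exact Finset.prod_le_prod (fun t ht => sub_nonneg.2 (hx1 t (hlt t ht)))
        fun t _ => Real.one_sub_le_exp_neg (x t)
    linarith [exp_neg_le_chord hs0 hs1]
  obtain ⟨n, rfl⟩ : ∃ n, m = n + 1 := ⟨m - 1, by omega⟩
  have habel := abel_lower_bound (n + 1) v _ hmono hpart n n.lt_succ_self
  have hnn := mul_nonneg (hvnn n n.lt_succ_self) (hpart (n + 1) le_rfl)
  rw [ge_iff_le, ← sub_nonneg, Finset.mul_sum, ← Finset.sum_sub_distrib]
  refine (hnn.trans habel).trans_eq (Finset.sum_congr rfl fun l _ => ?_)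
  ring
end

section
/- Let P be a partial Latin square of order n. Let M' be the set of rows of P containing at least one filled cell and R' the set of columns of P containing at least one filled cell. If |M'| + |R'| ≤ n, then P extends to a partial Latin square Q of order n whose set of filled cells is exactly M' × R'. -/
/-!
The square is completed greedily, one cell of `M' × R'` at a time. Throughout, every filled cell lies
in `M' × R'`, so an empty cell `(j, k)` of `M' × R'` sees at most `|R'| - 1` symbols in row `j` and at
most `|M'| - 1` symbols in column `k`. As `(|R'| - 1) + (|M'| - 1) < n`, some symbol is still
available there (`exists_free_symbol`), and writing it keeps the square partial Latin (`fill_cell`).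
Induction on the finite set of cells already treated then fills all of `M' × R'`.
-/

/-- A partial Latin square of order `n`: a partial function from cells
(row `j`, column `k`) to symbols, such that no symbol occurs twice in a row
or twice in a column. -/
def IsPLS (n : ℕ) (P : Fin n → Fin n → Option (Fin n)) : Prop :=
  (∀ j k k' s, P j k = some s → P j k' = some s → k = k') ∧
  (∀ j j' k s, P j k = some s → P j' k = some s → j = j')

/-- `Q` extends `P`: `Q` agrees with `P` on every cell where `P` is defined. -/
def PLSExtends (n : ℕ) (P Q : Fin n → Fin n → Option (Fin n)) : Prop :=
  ∀ j k s, P j k = some s → Q j k = some s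

/-- An empty cell of `M' × R'` admits a symbol that occurs neither in its row nor in its column. -/
theorem exists_free_symbol (n : ℕ) (Q : Fin n → Fin n → Option (Fin n))
    (M' R' : Finset (Fin n)) (hcard : M'.card + R'.card ≤ n)
    (hsupp : ∀ a b, (Q a b).isSome → a ∈ M' ∧ b ∈ R')
    (j k : Fin n) (hj : j ∈ M') (hk : k ∈ R') (hempty : Q j k = none) :
    ∃ s, (∀ b, Q j b ≠ some s) ∧ (∀ a, Q a k ≠ some s) := by
  -- `U` collects the symbols in the other cells of row `j` and of column `k`.
  set U : Finset (Fin n) := (R'.erase k).biUnion (fun b => (Q j b).toFinset) ∪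
    (M'.erase j).biUnion (fun a => (Q a k).toFinset) with hU
  have hone : ∀ o : Option (Fin n), o.toFinset.card ≤ 1 := by
    intro o; cases o <;> simp
  have h1 : ((R'.erase k).biUnion (fun b => (Q j b).toFinset)).card ≤ (R'.erase k).card * 1 :=
    Finset.card_biUnion_le_card_mul _ _ _ fun _ _ => hone _
  have h2 : ((M'.erase j).biUnion (fun a => (Q a k).toFinset)).card ≤ (M'.erase j).card * 1 :=
    Finset.card_biUnion_le_card_mul _ _ _ fun _ _ => hone _
  have hlt : U.card < n := by
    have h3 := Finset.card_union_le ((R'.erase k).biUnion (fun b => (Q j b).toFinset))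
      ((M'.erase j).biUnion (fun a => (Q a k).toFinset))
    rw [← hU] at h3
    have h4 := Finset.card_erase_add_one hk
    have h5 := Finset.card_erase_add_one hj
    omega
  obtain ⟨s, hs⟩ : ∃ s, s ∉ U := by
    by_contra! hall
    rw [Finset.eq_univ_iff_forall.mpr hall, Finset.card_univ, Fintype.card_fin] at hlt
    exact lt_irrefl _ hlt
  refine ⟨s, fun b hb => hs ?_, fun a ha => hs ?_⟩
  · have hbk : b ≠ k := by rintro rfl; simp [hempty] at hb
    refine Finset.mem_union_left _ (Finset.mem_biUnion.mpr ⟨b, ?_, by simp [hb]⟩)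
    exact Finset.mem_erase.mpr ⟨hbk, (hsupp j b (by simp [hb])).2⟩
  · have haj : a ≠ j := by rintro rfl; simp [hempty] at ha
    refine Finset.mem_union_right _ (Finset.mem_biUnion.mpr ⟨a, ?_, by simp [ha]⟩)
    exact Finset.mem_erase.mpr ⟨haj, (hsupp a k (by simp [ha])).1⟩

/-- One greedy step: the domain of `Q` can be enlarged by any single cell of `M' × R'`. A cell that is
already filled is allowed, in which case `Q` itself works. -/
theorem fill_cell (n : ℕ) (Q : Fin n → Fin n → Option (Fin n)) (hQ : IsPLS n Q)
    (M' R' : Finset (Fin n)) (hcard : M'.card + R'.card ≤ n)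
    (hsupp : ∀ a b, (Q a b).isSome → a ∈ M' ∧ b ∈ R')
    (j k : Fin n) (hj : j ∈ M') (hk : k ∈ R') :
    ∃ Q' : Fin n → Fin n → Option (Fin n), IsPLS n Q' ∧ PLSExtends n Q Q' ∧
      ∀ a b, (Q' a b).isSome ↔ ((a = j ∧ b = k) ∨ (Q a b).isSome) := by
  by_cases hfilled : (Q j k).isSome
  · refine ⟨Q, hQ, fun _ _ _ h => h, fun a b => ⟨Or.inr, ?_⟩⟩
    rintro (⟨rfl, rfl⟩ | h)
    exacts [hfilled, h]
  have hempty : Q j k = none := by simpa using hfilled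
  obtain ⟨s, hrow, hcol⟩ := exists_free_symbol n Q M' R' hcard hsupp j k hj hk hempty
  obtain ⟨hQr, hQc⟩ := hQ
  refine ⟨fun a b => if a = j ∧ b = k then some s else Q a b, ⟨?_, ?_⟩, ?_, ?_⟩
  · intro a b b' t h h'
    dsimp only at h h'
    split_ifs at h h' <;> grind
  · intro a a' b t h h'
    dsimp only at h h'
    split_ifs at h h' <;> grind
  · intro a b t h
    dsimp only
    split_ifs <;> grind
  · intro a b
    dsimp only
    split_ifs <;> simp_all

/-- If `M'` is the set of rows of `P` containing a filled cell and
`R'` the set of columns containing a filled cell, and `|M'| + |R'| ≤ n`, then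
`P` extends to a partial Latin square whose set of filled cells is exactly `M' × R'`. -/
theorem stmt_3 (n : ℕ) (P : Fin n → Fin n → Option (Fin n)) (hP : IsPLS n P)
    (M' R' : Finset (Fin n))
    (hM : ∀ j, j ∈ M' ↔ ∃ k, (P j k).isSome)
    (hR : ∀ k, k ∈ R' ↔ ∃ j, (P j k).isSome)
    (hcard : M'.card + R'.card ≤ n) :
    ∃ Q : Fin n → Fin n → Option (Fin n), IsPLS n Q ∧ PLSExtends n P Q ∧
      ∀ j k, (Q j k).isSome ↔ (j ∈ M' ∧ k ∈ R') := by
  have hsupp : ∀ a b, (P a b).isSome → a ∈ M' ∧ b ∈ R' :=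
    fun a b h => ⟨(hM a).mpr ⟨b, h⟩, (hR b).mpr ⟨a, h⟩⟩
  have key : ∀ T : Finset (Fin n × Fin n), T ⊆ M' ×ˢ R' →
      ∃ Q : Fin n → Fin n → Option (Fin n), IsPLS n Q ∧ PLSExtends n P Q ∧
        ∀ a b, (Q a b).isSome ↔ ((a, b) ∈ T ∨ (P a b).isSome) := by
    intro T
    induction T using Finset.induction_on with
    | empty => exact fun _ => ⟨P, hP, fun _ _ _ h => h, by simp⟩
    | insert c T _ ih =>
      intro hT
      obtain ⟨hc, hT'⟩ := Finset.insert_subset_iff.mp hT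
      obtain ⟨Q, hQ, hPQ, hdom⟩ := ih hT'
      have hQsupp : ∀ a b, (Q a b).isSome → a ∈ M' ∧ b ∈ R' := by
        intro a b h
        rcases (hdom a b).mp h with h | h
        · exact Finset.mem_product.mp (hT' h)
        · exact hsupp a b h
      obtain ⟨j, k⟩ := c
      obtain ⟨hj, hk⟩ := Finset.mem_product.mp hc
      obtain ⟨Q', hQ', hQQ', hdom'⟩ := fill_cell n Q hQ M' R' hcard hQsupp j k hj hk
      refine ⟨Q', hQ', fun a b t h => hQQ' a b t (hPQ a b t h), fun a b => ?_⟩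
      rw [hdom', hdom, Finset.mem_insert, Prod.mk.injEq, or_assoc]
  obtain ⟨Q, hQ, hPQ, hdom⟩ := key (M' ×ˢ R') subset_rfl
  refine ⟨Q, hQ, hPQ, fun a b => ?_⟩
  rw [hdom, Finset.mem_product]
  exact ⟨fun h => h.elim id (hsupp a b), Or.inl⟩
end

section
/- Let P be a partial Latin square of order n all of whose filled cells lie within M' × R' for some sets of rows M' ⊆ [n] and columns R' ⊆ [n] with |M'| + |R'| ≤ n. Then P extends to a complete Latin square of order n. -/
open Finset

/-! ### König's line colouring theorem -/

/-- A nonnegative integer matrix with constant positive line sums has a nonzero transversal. -/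
lemma exists_perm_of_line_sums {ι : Type*} [Fintype ι] [DecidableEq ι] (A : ι → ι → ℕ) (d : ℕ)
    (hd : 0 < d) (hrow : ∀ i, ∑ j, A i j = d) (hcol : ∀ j, ∑ i, A i j = d) :
    ∃ τ : Equiv.Perm ι, ∀ i, A i (τ i) ≠ 0 := by
  have hall : ∀ s : Finset ι, #s ≤ #(s.biUnion fun i => univ.filter fun j => A i j ≠ 0) := by
    intro s
    set N := s.biUnion fun i => univ.filter fun j => A i j ≠ 0 with hN
    have h1 : ∑ i ∈ s, ∑ j, A i j = ∑ i ∈ s, ∑ j ∈ N, A i j := by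
      refine sum_congr rfl fun i hi => (sum_subset (subset_univ N) ?_).symm
      intro j _ hj
      by_contra h
      exact hj (mem_biUnion.2 ⟨i, hi, by simpa using h⟩)
    have h2 : ∑ i ∈ s, ∑ j ∈ N, A i j ≤ ∑ j ∈ N, ∑ i, A i j := by
      rw [sum_comm]
      exact sum_le_sum fun j _ => sum_le_sum_of_subset (subset_univ s)
    simp only [hrow, hcol, sum_const, smul_eq_mul] at h1 h2
    rw [← h1] at h2
    exact Nat.le_of_mul_le_mul_right h2 hd
  obtain ⟨f, hf, hmem⟩ := (all_card_le_biUnion_card_iff_exists_injective _).1 hall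
  refine ⟨Equiv.ofBijective f (Finite.injective_iff_bijective.1 hf), fun i => ?_⟩
  simpa using hmem i

/-- A nonnegative integer matrix with all line sums `#C` is covered by `#C` permutations,
here indexed by `C`. -/
lemma exists_perms_cover {ι κ : Type*} [Fintype ι] [DecidableEq ι] [DecidableEq κ]
    (C : Finset κ) : ∀ (A : ι → ι → ℕ), (∀ i, ∑ j, A i j = #C) → (∀ j, ∑ i, A i j = #C) →
    ∃ τ : κ → Equiv.Perm ι, ∀ i j, A i j ≠ 0 → ∃ c ∈ C, τ c i = j := by
  induction C using Finset.induction_on with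
  | empty =>
    intro A hrow _
    refine ⟨fun _ => 1, fun i j h => absurd ?_ h⟩
    have := hrow i
    simp only [card_empty, sum_eq_zero_iff, mem_univ, true_imp_iff] at this
    exact this j
  | insert c₀ C hc ih =>
    intro A hrow hcol
    rw [card_insert_of_notMem hc] at hrow hcol
    obtain ⟨τ₀, hτ₀⟩ := exists_perm_of_line_sums A _ (Nat.succ_pos _) hrow hcol
    -- subtracting one permutation matrix lowers every line sum by one
    have hA : ∀ i j, (A i j - if τ₀ i = j then 1 else 0) + (if τ₀ i = j then 1 else 0) = A i j := by
      intro i j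
      refine Nat.sub_add_cancel ?_
      split_ifs with h
      · exact Nat.one_le_iff_ne_zero.2 (h ▸ hτ₀ i)
      · exact Nat.zero_le _
    obtain ⟨τ, hτ⟩ := ih (fun i j => A i j - if τ₀ i = j then 1 else 0)
      (fun i => by
        have h := hrow i
        rw [← sum_congr rfl fun j _ => hA i j, sum_add_distrib] at h
        simpa using h)
      (fun j => by
        have h := hcol j
        rw [← sum_congr rfl fun i _ => hA i j, sum_add_distrib] at h
        simpa [← Equiv.eq_symm_apply] using h)
    refine ⟨Function.update τ c₀ τ₀, fun i j hij => ?_⟩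
    by_cases h : τ₀ i = j
    · exact ⟨c₀, mem_insert_self _ _, by simpa using h⟩
    · obtain ⟨c, hcC, hcj⟩ := hτ i j (by simpa [h] using hij)
      refine ⟨c, mem_insert_of_mem hcC, ?_⟩
      rw [Function.update_of_ne (ne_of_mem_of_not_mem hcC hc)]
      exact hcj

/-- König's line colouring theorem: a bipartite graph `G` of maximum degree at most `#C` has a
proper edge colouring with colours in `C`. -/
lemma exists_edge_coloring {α β κ : Type*} [Fintype α] [Fintype β] [DecidableEq α] [DecidableEq β]
    [DecidableEq κ] [Nonempty κ] (G : α → β → Prop) [∀ a b, Decidable (G a b)] (C : Finset κ)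
    (ha : ∀ a, #{b | G a b} ≤ #C) (hb : ∀ b, #{a | G a b} ≤ #C) :
    ∃ c : α → β → κ, (∀ a b, G a b → c a b ∈ C) ∧
      (∀ a b b', G a b → G a b' → c a b = c a b' → b = b') ∧
      (∀ a a' b, G a b → G a' b → c a b = c a' b → a = a') := by
  let A : α ⊕ β → α ⊕ β → ℕ := fun x y => match x, y with
    | .inl a, .inr b => if G a b then 1 else 0
    | .inr b, .inl a => if G a b then 1 else 0
    | .inl a, .inl a' => if a = a' then #C - #{b | G a b} else 0
    | .inr b, .inr b' => if b = b' then #C - #{a | G a b} else 0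
  obtain ⟨τ, hτ⟩ := exists_perms_cover C A
    (by rintro (a | b)
        · have := ha a
          simp [A, Fintype.sum_sum_type]; omega
        · have := hb b
          simp [A, Fintype.sum_sum_type]; omega)
    (by rintro (a | b)
        · have := ha a
          simp [A, Fintype.sum_sum_type]; omega
        · have := hb b
          simp [A, Fintype.sum_sum_type]; omega)
  have key : ∀ a b, ∃ c, G a b → c ∈ C ∧ τ c (.inl a) = .inr b := by
    intro a b
    by_cases h : G a b
    · obtain ⟨c, hc⟩ := hτ (.inl a) (.inr b) (by simp [A, h])
      exact ⟨c, fun _ => hc⟩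
    · exact ⟨Classical.arbitrary κ, fun h' => absurd h' h⟩
  choose c hc using key
  refine ⟨c, fun a b h => (hc a b h).1, fun a b b' h h' e => ?_, fun a a' b h h' e => ?_⟩
  · have h1 := (hc a b h).2
    rw [e, (hc a b' h').2] at h1
    exact (Sum.inr_injective h1).symm
  · have h1 := (hc a b h).2
    rw [e, ← (hc a' b h').2] at h1
    exact Sum.inl_injective ((τ _).injective h1)

/-! ### Filling a block and adding lines -/

/-- A partial Latin square as its set of triples (row, column, symbol): any two coordinates
determine the third. -/
structure LatinTriples {n : ℕ} (T : Fin n → Fin n → Fin n → Prop) : Prop where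
  sym : ∀ j k s s', T j k s → T j k s' → s = s'
  col : ∀ j k k' s, T j k s → T j k' s → k = k'
  row : ∀ j j' k s, T j k s → T j' k s → j = j'

namespace LatinTriples

variable {n : ℕ} {T : Fin n → Fin n → Fin n → Prop}

lemma transpose (hT : LatinTriples T) : LatinTriples fun k j s => T j k s where
  sym _ _ _ _ h h' := hT.sym _ _ _ _ h h'
  col _ _ _ _ h h' := hT.row _ _ _ _ h h'
  row _ _ _ _ h h' := hT.col _ _ _ _ h h'

open Classical in
lemma card_row_le (hT : LatinTriples T) (R : Finset (Fin n)) (j : Fin n)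
    (hsup : ∀ k s, T j k s → k ∈ R) : #{s | ∃ k, T j k s} ≤ #R := by
  refine card_le_card_of_forall_subsingleton (fun s k => T j k s) ?_ ?_
  · intro s hs
    obtain ⟨k, hk⟩ := (mem_filter.1 hs).2
    exact ⟨k, hsup k s hk, hk⟩
  · rintro k _ s ⟨_, h⟩ s' ⟨_, h'⟩
    exact hT.sym _ _ _ _ h h'

open Classical in
lemma le_card_row (hT : LatinTriples T) (R : Finset (Fin n)) (j : Fin n)
    (hfull : ∀ k ∈ R, ∃ s, T j k s) : #R ≤ #{s | ∃ k, T j k s} := by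
  refine card_le_card_of_forall_subsingleton (fun k s => T j k s) ?_ ?_
  · intro k hk
    obtain ⟨s, hs⟩ := hfull k hk
    exact ⟨s, by simpa using ⟨k, hs⟩, hs⟩
  · rintro s _ k ⟨_, h⟩ k' ⟨_, h'⟩
    exact hT.col _ _ _ _ h h'

open Classical in
/-- Greedy filling of the cells `S` inside an `M × R` block with `|M| + |R| ≤ n`. -/
lemma exists_fill (hT : LatinTriples T) (M R : Finset (Fin n)) (hcard : #M + #R ≤ n)
    (hsup : ∀ j k s, T j k s → j ∈ M ∧ k ∈ R) (S : Finset (Fin n × Fin n)) (hS : S ⊆ M ×ˢ R) :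
    ∃ T' : Fin n → Fin n → Fin n → Prop, LatinTriples T' ∧ (∀ j k s, T j k s → T' j k s) ∧
      (∀ j k s, T' j k s → j ∈ M ∧ k ∈ R) ∧ ∀ x ∈ S, ∃ s, T' x.1 x.2 s := by
  induction S using Finset.induction_on with
  | empty => exact ⟨T, hT, fun _ _ _ h => h, hsup, by simp⟩
  | insert x S _ ih =>
    obtain ⟨T', hT', hext, hsup', hfull⟩ := ih ((subset_insert _ _).trans hS)
    obtain ⟨j₀, k₀⟩ := x
    obtain ⟨hj, hk⟩ := mem_product.1 (hS (mem_insert_self _ _))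
    by_cases hx : ∃ s, T' j₀ k₀ s
    · refine ⟨T', hT', hext, hsup', fun y hy => ?_⟩
      rcases mem_insert.1 hy with rfl | hy
      exacts [hx, hfull y hy]
    push Not at hx
    -- since the cell is empty, it does not count towards its row or column
    have h1 := hT'.card_row_le (R.erase k₀) j₀ fun k s h =>
      mem_erase.2 ⟨fun e => hx s (e ▸ h), (hsup' _ _ _ h).2⟩
    have h2 := hT'.transpose.card_row_le (M.erase j₀) k₀ fun j s h =>
      mem_erase.2 ⟨fun e => hx s (e ▸ h), (hsup' _ _ _ h).1⟩
    have hlt : #(({s | ∃ k, T' j₀ k s} : Finset (Fin n)) ∪ ({s | ∃ j, T' j k₀ s} : Finset (Fin n))) <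
        #(univ : Finset (Fin n)) := by
      have := card_union_le ({s | ∃ k, T' j₀ k s} : Finset (Fin n)) {s | ∃ j, T' j k₀ s}
      rw [card_erase_of_mem hk] at h1
      rw [card_erase_of_mem hj] at h2
      have := card_pos.2 ⟨_, hj⟩
      simp only [card_univ, Fintype.card_fin]
      omega
    obtain ⟨s₀, -, hs₀⟩ := exists_mem_notMem_of_card_lt_card hlt
    simp only [mem_union, mem_filter, mem_univ, true_and, not_or, not_exists] at hs₀
    obtain ⟨hr, hc⟩ := hs₀
    refine ⟨fun j k s => T' j k s ∨ (j = j₀ ∧ k = k₀ ∧ s = s₀), ⟨?_, ?_, ?_⟩,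
      fun j k s h => .inl (hext j k s h), ?_, ?_⟩
    · rintro j k s s' (h | ⟨rfl, rfl, rfl⟩) (h' | ⟨h1, h2, h3⟩)
      · exact hT'.sym _ _ _ _ h h'
      · exact absurd (h1 ▸ h2 ▸ h) (hx s)
      · exact absurd h' (hx _)
      · exact h3.symm
    · rintro j k k' s (h | ⟨rfl, rfl, rfl⟩) (h' | ⟨h1, h2, h3⟩)
      · exact hT'.col _ _ _ _ h h'
      · exact absurd (h1 ▸ h3 ▸ h) (hr k)
      · exact absurd h' (hr _)
      · exact h2.symm
    · rintro j j' k s (h | ⟨rfl, rfl, rfl⟩) (h' | ⟨h1, h2, h3⟩)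
      · exact hT'.row _ _ _ _ h h'
      · exact absurd (h2 ▸ h3 ▸ h) (hc j)
      · exact absurd h' (hc _)
      · exact h1.symm
    · rintro j k s (h | ⟨rfl, rfl, -⟩)
      exacts [hsup' _ _ _ h, ⟨hj, hk⟩]
    · intro y hy
      rcases mem_insert.1 hy with rfl | hy
      · exact ⟨s₀, .inr ⟨rfl, rfl, rfl⟩⟩
      · obtain ⟨s, hs⟩ := hfull y hy
        exact ⟨s, .inl hs⟩

open Classical in
/-- Adding columns: a Latin array filling exactly `M × R` extends to one filling exactly
`M × [n]`, provided no symbol is missing from more than `n - |R|` rows of `M`. -/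
lemma exists_extend (hT : LatinTriples T) (M R : Finset (Fin n))
    (hsup : ∀ j k s, T j k s → j ∈ M ∧ k ∈ R) (hfull : ∀ j ∈ M, ∀ k ∈ R, ∃ s, T j k s)
    (hdeg : ∀ s, #{j | j ∈ M ∧ ¬ ∃ k, T j k s} ≤ n - #R) :
    ∃ T' : Fin n → Fin n → Fin n → Prop, LatinTriples T' ∧ (∀ j k s, T j k s → T' j k s) ∧
      (∀ j k s, T' j k s → j ∈ M) ∧ ∀ j ∈ M, ∀ k, ∃ s, T' j k s := by
  let G : Fin n → Fin n → Prop := fun j s => j ∈ M ∧ ¬ ∃ k, T j k s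
  have hC : #Rᶜ = n - #R := by rw [card_compl, Fintype.card_fin]
  have hrow : ∀ j ∈ M, #{s | G j s} = #Rᶜ := by
    intro j hj
    have h1 := hT.card_row_le R j fun k s h => (hsup j k s h).2
    have h2 := hT.le_card_row R j (hfull j hj)
    have h3 : ({s | G j s} : Finset (Fin n)) = ({s | ∃ k, T j k s} : Finset (Fin n))ᶜ := by
      ext s; simp [G, hj]
    rw [h3, card_compl, card_compl, le_antisymm h1 h2]
  rcases isEmpty_or_nonempty (Fin n) with hn | hn
  · exact ⟨T, hT, fun _ _ _ h => h, fun j => hn.elim j, fun j => hn.elim j⟩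
  obtain ⟨c, hcC, hcs, hcj⟩ := exists_edge_coloring G Rᶜ
    (fun j => by
      by_cases hj : j ∈ M
      · exact (hrow j hj).le
      · simp [G, hj])
    (fun s => by rw [hC]; exact hdeg s)
  -- old entries lie in columns of `R`, new ones do not
  have hnot : ∀ j k s s', T j k s → G j s' → c j s' ≠ k := by
    rintro j k s s' h hG rfl
    exact mem_compl.1 (hcC _ _ hG) (hsup _ _ _ h).2
  refine ⟨fun j k s => T j k s ∨ (G j s ∧ c j s = k), ⟨?_, ?_, ?_⟩,
      fun j k s h => .inl h, ?_, ?_⟩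
  · rintro j k s s' (h | ⟨h, e⟩) (h' | ⟨h', e'⟩)
    · exact hT.sym _ _ _ _ h h'
    · exact absurd e' (hnot _ _ _ _ h h')
    · exact absurd e (hnot _ _ _ _ h' h)
    · exact hcs _ _ _ h h' (e.trans e'.symm)
  · rintro j k k' s (h | ⟨h, e⟩) (h' | ⟨h', e'⟩)
    · exact hT.col _ _ _ _ h h'
    · exact absurd ⟨_, h⟩ h'.2
    · exact absurd ⟨_, h'⟩ h.2
    · exact e.symm.trans e'
  · rintro j j' k s (h | ⟨h, e⟩) (h' | ⟨h', e'⟩)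
    · exact hT.row _ _ _ _ h h'
    · exact absurd (hsup _ _ _ h).2 (e' ▸ mem_compl.1 (hcC _ _ h'))
    · exact absurd (hsup _ _ _ h').2 (e ▸ mem_compl.1 (hcC _ _ h))
    · exact hcj _ _ _ h h' (e.trans e'.symm)
  · rintro j k s (h | ⟨h, -⟩)
    exacts [(hsup _ _ _ h).1, h.1]
  · intro j hj k
    by_cases hk : k ∈ R
    · obtain ⟨s, hs⟩ := hfull j hj k hk
      exact ⟨s, .inl hs⟩
    -- row `j` has as many missing symbols as there are new columns, so all of them are used
    · obtain ⟨s, hs, e⟩ := surjOn_of_injOn_of_card_le (s := ({s | G j s} : Finset (Fin n)))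
        (t := Rᶜ) (c j) (fun s hs => hcC _ _ (by simpa using hs))
        (fun s hs s' hs' e => hcs _ _ _ (by simpa using hs) (by simpa using hs') e)
        (hrow j hj).ge (mem_coe.2 (mem_compl.2 hk))
      exact ⟨s, .inr ⟨by simpa using hs, e⟩⟩

end LatinTriples

/-! ### Completing the square -/

/-- Ryser-type extension: if all filled cells of `P` lie within
`M' × R'` with `|M'| + |R'| ≤ n`, then `P` extends to a complete Latin square
of order `n` (a partial Latin square defined on every cell). -/
theorem stmt_4 (n : ℕ) (P : Fin n → Fin n → Option (Fin n)) (hP : IsPLS n P)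
    (M' R' : Finset (Fin n))
    (hsub : ∀ j k, (P j k).isSome → j ∈ M' ∧ k ∈ R')
    (hcard : M'.card + R'.card ≤ n) :
    ∃ Q : Fin n → Fin n → Option (Fin n), IsPLS n Q ∧ PLSExtends n P Q ∧
      ∀ j k, (Q j k).isSome := by
  classical
  have h0 : LatinTriples fun j k s => P j k = some s :=
    ⟨fun j k s s' h h' => Option.some_injective _ (h.symm.trans h'), hP.1, hP.2⟩
  obtain ⟨T₁, h1, hext1, hsup1, hfull1⟩ := h0.exists_fill M' R' hcard
    (fun j k s h => hsub j k (by simp [h])) (M' ×ˢ R') subset_rfl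
  obtain ⟨T₂, h2, hext2, hsup2, hfull2⟩ := h1.exists_extend M' R' hsup1
    (fun j hj k hk => hfull1 (j, k) (mem_product.2 ⟨hj, hk⟩))
    (fun s => by
      have : #{j | j ∈ M' ∧ ¬ ∃ k, T₁ j k s} ≤ #M' :=
        card_le_card fun j hj => (mem_filter.1 hj).2.1
      omega)
  -- the rows in `M'` are now complete, so each of them contains every symbol
  have hall : ∀ j ∈ M', ∀ s, ∃ k, T₂ j k s := by
    intro j hj s
    have h := h2.le_card_row univ j fun k _ => hfull2 j hj k
    have h' := eq_univ_of_card _ (le_antisymm (card_le_univ _) h)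
    have hs := mem_univ s
    rw [← h'] at hs
    exact (mem_filter.1 hs).2
  obtain ⟨T₃, h3, hext3, -, hfull3⟩ := h2.transpose.exists_extend univ M'
    (fun k j s h => ⟨mem_univ _, hsup2 _ _ _ h⟩) (fun k _ j hj => hfull2 j hj k)
    (fun s => by
      have hle : #M' ≤ #{k | ∃ j, T₂ j k s} := by
        refine card_le_card_of_forall_subsingleton (fun j k => T₂ j k s) ?_ ?_
        · intro j hj
          obtain ⟨k, hk⟩ := hall j hj s
          exact ⟨k, by simpa using ⟨j, hk⟩, hk⟩
        · rintro k _ j ⟨_, h⟩ j' ⟨_, h'⟩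
          exact h2.row _ _ _ _ h h'
      have heq : ({k | k ∈ univ ∧ ¬ ∃ j, T₂ j k s} : Finset (Fin n)) =
          ({k | ∃ j, T₂ j k s} : Finset (Fin n))ᶜ := by
        ext k; simp
      rw [heq, card_compl, Fintype.card_fin]
      omega)
  choose q hq using fun j k => hfull3 k (mem_univ k) j
  refine ⟨fun j k => some (q j k), ⟨?_, ?_⟩, ?_, fun _ _ => rfl⟩
  · intro j k k' s h h'
    rw [Option.some_inj] at h h'
    exact h3.row _ _ j s (h ▸ hq j k) (h' ▸ hq j k')
  · intro j j' k s h h'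
    rw [Option.some_inj] at h h'
    exact h3.col k _ _ s (h ▸ hq j k) (h' ▸ hq j' k)
  · intro j k s h
    exact congrArg some (h3.sym _ _ _ _ (hq j k) (hext3 _ _ _ (hext2 _ _ _ (hext1 _ _ _ h))))
end

section
/- Let P be a partial Latin square of order n whose set of filled cells is exactly M' × R', where M' ⊆ [n] is a set of rows with |M'| = m, R' ⊆ [n] is a set of columns with |R'| = r, and m + r ≤ n. Then P extends to a partial Latin square of order n whose set of filled cells is exactly M' × [n]. -/
/-- If every `t i` has `d > 0` elements and every `a` lies in at most `d` of the `t i`, then there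
is a system of distinct representatives that uses every `a` lying in exactly `d` of the `t i`. -/
theorem exists_covering_matching {ι α : Type} [Fintype ι] [Fintype α] [DecidableEq ι]
    [DecidableEq α] (d : ℕ) (hd : 0 < d) (t : ι → Finset α) (ht : ∀ i, (t i).card = d)
    (hdeg : ∀ a, (Finset.univ.filter fun i => a ∈ t i).card ≤ d) :
    ∃ f : ι → α, Function.Injective f ∧ (∀ i, f i ∈ t i) ∧
      ∀ a, (Finset.univ.filter fun i => a ∈ t i).card = d → ∃ i, f i = a := by
  classical
  let A : Matrix ι α ℚ := fun i a => if a ∈ t i then 1 else 0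
  let D : Matrix α α ℚ :=
    Matrix.diagonal fun a => (d : ℚ) - (Finset.univ.filter fun i => a ∈ t i).card
  let B : Matrix (ι ⊕ α) (ι ⊕ α) ℚ := Matrix.fromBlocks 0 A A.transpose D
  have hd' : (0 : ℚ) < d := by exact_mod_cast hd
  have hB11 : ∀ i j, B (Sum.inl i) (Sum.inl j) = 0 := fun _ _ => rfl
  have hB12 : ∀ i a, B (Sum.inl i) (Sum.inr a) = if a ∈ t i then 1 else 0 := fun _ _ => rfl
  have hB21 : ∀ a i, B (Sum.inr a) (Sum.inl i) = if a ∈ t i then 1 else 0 := fun _ _ => rfl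
  have hB22 : ∀ a b, B (Sum.inr a) (Sum.inr b) =
      if a = b then (d : ℚ) - (Finset.univ.filter fun i => a ∈ t i).card else 0 := by
    intro a b
    have h : B (Sum.inr a) (Sum.inr b) = D a b := rfl
    rw [h]
    exact Matrix.diagonal_apply _ _ _
  clear_value B
  have hB0 : ∀ x y, 0 ≤ B x y := by
    rintro (i | a) (j | b)
    · simp [hB11]
    · rw [hB12]; split_ifs <;> simp
    · rw [hB21]; split_ifs <;> simp
    · rw [hB22]
      split_ifs
      · have := hdeg a
        have : ((Finset.univ.filter fun i => a ∈ t i).card : ℚ) ≤ d := by exact_mod_cast this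
        linarith
      · exact le_rfl
  have hrow : ∀ x, ∑ y, B x y = d := by
    rintro (i | a)
    · simp [hB11, hB12, ht]
    · simp [hB21, hB22]
  have hsymm : ∀ x y, B x y = B y x := by
    rintro (i | a) (j | b)
    · simp [hB11]
    · simp [hB12, hB21]
    · simp [hB12, hB21]
    · by_cases h : a = b
      · subst h; rfl
      · simp [hB22, h, Ne.symm h]
  have hM : (d : ℚ)⁻¹ • B ∈ doublyStochastic ℚ (ι ⊕ α) := by
    rw [mem_doublyStochastic_iff_sum]
    refine ⟨fun x y => ?_, fun x => ?_, fun y => ?_⟩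
    · exact mul_nonneg (by positivity) (hB0 x y)
    · simp only [Matrix.smul_apply, smul_eq_mul, ← Finset.mul_sum, hrow]
      field_simp
    · simp only [Matrix.smul_apply, smul_eq_mul, ← Finset.mul_sum, hsymm _ y, hrow]
      field_simp
  obtain ⟨w, hw0, hw1, hw⟩ := exists_eq_sum_perm_of_mem_doublyStochastic hM
  -- A permutation of positive weight lies in the support of `B`.
  obtain ⟨σ, -, hσ⟩ : ∃ σ ∈ Finset.univ, (0 : ℚ) < w σ := by
    apply Finset.exists_lt_of_sum_lt
    simp [hw1]
  have hpos : ∀ x, B x (σ x) ≠ 0 := by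
    intro x h0
    have h1 := congrFun (congrFun hw x) (σ x)
    simp only [Matrix.sum_apply, Matrix.smul_apply, smul_eq_mul, h0, mul_zero] at h1
    have h2 : w σ * (σ.permMatrix ℚ) x (σ x) ≤ ∑ τ, w τ * (τ.permMatrix ℚ) x (σ x) := by
      refine Finset.single_le_sum (f := fun τ : Equiv.Perm (ι ⊕ α) =>
        w τ * (τ.permMatrix ℚ) x (σ x)) (fun τ _ => mul_nonneg (hw0 τ) ?_) (Finset.mem_univ σ)
      simp only [Equiv.Perm.permMatrix, PEquiv.toMatrix_apply]
      split_ifs <;> simp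
    rw [h1] at h2
    simp [Equiv.Perm.permMatrix, PEquiv.toMatrix_apply] at h2
    linarith
  have hf : ∀ i, ∃ a, σ (Sum.inl i) = Sum.inr a ∧ a ∈ t i := by
    intro i
    have := hpos (Sum.inl i)
    rcases h : σ (Sum.inl i) with j | a
    · simp [h, hB11] at this
    · refine ⟨a, rfl, ?_⟩
      by_contra hn
      simp [h, hB12, hn] at this
  choose f hf hft using hf
  refine ⟨f, fun i j hij => ?_, hft, fun a ha => ?_⟩
  · have : σ (Sum.inl i) = σ (Sum.inl j) := by rw [hf, hf, hij]
    exact Sum.inl_injective (σ.injective this)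
  · -- The diagonal entry at a symbol of degree `d` is zero, so its column is hit from a row in `ι`.
    obtain ⟨x, hx⟩ := σ.surjective (Sum.inr a)
    have := hpos x
    rcases x with i | b
    · exact ⟨i, Sum.inr_injective ((hf i).symm.trans hx)⟩
    · exfalso
      rw [hx] at this
      by_cases hba : b = a
      · subst hba; simp [hB22, ha] at this
      · simp [hB22, hba] at this

/-- König's edge coloring theorem for a bipartite graph that is `d`-regular on one side and of
maximum degree at most `d` on the other: `f i c` is the neighbor of `i` along the edge of
color `c`. -/
theorem exists_edge_coloring_s5 {ι α : Type} [Fintype ι] [Fintype α] [DecidableEq ι]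
    [DecidableEq α] (d : ℕ) (t : ι → Finset α) (ht : ∀ i, (t i).card = d)
    (hdeg : ∀ a, (Finset.univ.filter fun i => a ∈ t i).card ≤ d) :
    ∃ f : ι → Fin d → α, (∀ i, Function.Injective (f i)) ∧ (∀ i c, f i c ∈ t i) ∧
      ∀ c, Function.Injective fun i => f i c := by
  induction d generalizing t with
  | zero => exact ⟨fun _ c => c.elim0, fun _ c => c.elim0, fun _ c => c.elim0, fun c => c.elim0⟩
  | succ d ih =>
    obtain ⟨g, hg, hgt, hgd⟩ := exists_covering_matching (d + 1) d.succ_pos t ht hdeg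
    obtain ⟨f, hf1, hf2, hf3⟩ := ih (fun i => (t i).erase (g i))
      (fun i => by rw [Finset.card_erase_of_mem (hgt i), ht]; rfl) (fun a => by
        have hsub : (Finset.univ.filter fun i => a ∈ (t i).erase (g i)) ⊆
            Finset.univ.filter fun i => a ∈ t i := by
          intro i; simp
        rcases (hdeg a).lt_or_eq with h | h
        · exact (Finset.card_le_card hsub).trans (Nat.lt_succ_iff.mp h)
        · obtain ⟨i, rfl⟩ := hgd a h
          have hlt : (Finset.univ.filter fun j => g i ∈ (t j).erase (g j)) ⊂
              Finset.univ.filter fun j => g i ∈ t j := by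
            refine (Finset.ssubset_iff_of_subset hsub).2 ⟨i, ?_, ?_⟩
            · simp [hgt]
            · simp
          have := Finset.card_lt_card hlt
          omega)
    have hne : ∀ i c, f i c ≠ g i := fun i c => (Finset.mem_erase.1 (hf2 i c)).1
    refine ⟨fun i => Fin.cons (g i) (f i), fun i => ?_, fun i c => ?_, fun c => ?_⟩
    · rw [Fin.cons_injective_iff]
      exact ⟨fun ⟨c, hc⟩ => hne i c hc, hf1 i⟩
    · refine Fin.cases ?_ (fun c => ?_) c
      · simpa using hgt i
      · simpa using Finset.mem_of_mem_erase (hf2 i c)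
    · refine Fin.cases ?_ (fun c => ?_) c
      · simpa using hg
      · simpa using hf3 c

/-- If the filled cells of `P` are exactly `M' × R'` with
`|M'| = m`, `|R'| = r`, and `m + r ≤ n`, then `P` extends to a partial Latin
square whose filled cells are exactly `M' × [n]` (all columns). -/
theorem stmt_5 (n m r : ℕ) (P : Fin n → Fin n → Option (Fin n)) (hP : IsPLS n P)
    (M' R' : Finset (Fin n))
    (hm : M'.card = m) (hr : R'.card = r) (hmr : m + r ≤ n)
    (hfill : ∀ j k, (P j k).isSome ↔ (j ∈ M' ∧ k ∈ R')) :
    ∃ Q : Fin n → Fin n → Option (Fin n), IsPLS n Q ∧ PLSExtends n P Q ∧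
      ∀ j k, (Q j k).isSome ↔ j ∈ M' := by
  classical
  -- `t j` is the set of symbols missing from row `j`.
  let t : {j // j ∈ M'} → Finset (Fin n) := fun j =>
    Finset.univ.filter fun s => ∀ k, P j k ≠ some s
  have ht : ∀ j, (t j).card = n - r := by
    intro j
    have hg : ∀ k : {k // k ∈ R'}, ∃ s, P j k = some s := fun k =>
      Option.isSome_iff_exists.1 ((hfill j k).2 ⟨j.2, k.2⟩)
    choose g hg using hg
    have hinj : Function.Injective g := fun k k' h =>
      Subtype.ext (hP.1 j k k' (g k) (hg k) (by rw [hg, h]))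
    have htc : t j = (Finset.univ.image g)ᶜ := by
      ext s
      simp only [t, Finset.mem_filter, Finset.mem_univ, true_and, Finset.mem_compl,
        Finset.mem_image, not_exists]
      constructor
      · rintro h k rfl
        exact h k (hg k)
      · intro h k hk
        have hkR : k ∈ R' := ((hfill j k).1 (by simp [hk])).2
        have h1 := hg ⟨k, hkR⟩
        rw [hk] at h1
        exact h ⟨k, hkR⟩ (Option.some.inj h1).symm
    rw [htc, Finset.card_compl, Finset.card_image_of_injective _ hinj]
    simp [hr]
  obtain ⟨f, hf1, hf2, hf3⟩ := exists_edge_coloring_s5 (n - r) t ht (fun a => by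
    refine (Finset.card_le_univ _).trans ?_
    simp only [Fintype.card_coe]
    omega)
  have hcard : Fintype.card {k // k ∉ R'} = Fintype.card (Fin (n - r)) := by
    rw [Fintype.card_subtype_compl]
    simp [hr]
  let e : {k // k ∉ R'} ≃ Fin (n - r) := Fintype.equivOfCardEq hcard
  let Q : Fin n → Fin n → Option (Fin n) := fun j k =>
    if hj : j ∈ M' then if hk : k ∈ R' then P j k else some (f ⟨j, hj⟩ (e ⟨k, hk⟩)) else none
  have hQM : ∀ j k s, Q j k = some s → j ∈ M' := by
    intro j k s h
    by_contra hj
    simp [Q, hj] at h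
  have hQR : ∀ j k, j ∈ M' → k ∈ R' → Q j k = P j k := by
    intro j k hj hk
    simp [Q, hj, hk]
  have hQN : ∀ j k (hj : j ∈ M') (hk : k ∉ R'), Q j k = some (f ⟨j, hj⟩ (e ⟨k, hk⟩)) := by
    intro j k hj hk
    simp [Q, hj, hk]
  have hmiss : ∀ j (hj : j ∈ M') c k, P j k ≠ some (f ⟨j, hj⟩ c) := by
    intro j hj c
    exact (Finset.mem_filter.1 (hf2 ⟨j, hj⟩ c)).2
  refine ⟨Q, ⟨fun j k k' s h h' => ?_, fun j j' k s h h' => ?_⟩, fun j k s h => ?_,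
    fun j k => ?_⟩
  · have hj := hQM j k s h
    by_cases hk : k ∈ R' <;> by_cases hk' : k' ∈ R'
    · rw [hQR j _ hj hk] at h
      rw [hQR j _ hj hk'] at h'
      exact hP.1 j k k' s h h'
    · rw [hQR j _ hj hk] at h
      rw [hQN j _ hj hk'] at h'
      exact absurd (h.trans h'.symm) (hmiss _ _ _ _)
    · rw [hQN j _ hj hk] at h
      rw [hQR j _ hj hk'] at h'
      exact absurd (h'.trans h.symm) (hmiss _ _ _ _)
    · rw [hQN j _ hj hk] at h
      rw [hQN j _ hj hk'] at h'
      have := e.injective (hf1 _ (Option.some.inj (h.trans h'.symm)))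
      exact congrArg Subtype.val this
  · have hj := hQM j k s h
    have hj' := hQM j' k s h'
    by_cases hk : k ∈ R'
    · rw [hQR _ _ hj hk] at h
      rw [hQR _ _ hj' hk] at h'
      exact hP.2 j j' k s h h'
    · rw [hQN _ _ hj hk] at h
      rw [hQN _ _ hj' hk] at h'
      have := hf3 _ (Option.some.inj (h.trans h'.symm))
      exact congrArg Subtype.val this
  · obtain ⟨hj, hk⟩ := (hfill j k).1 (by simp [h])
    rw [hQR _ _ hj hk, h]
  · constructor
    · intro h
      obtain ⟨s, hs⟩ := Option.isSome_iff_exists.1 h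
      exact hQM _ _ _ hs
    · intro hj
      by_cases hk : k ∈ R'
      · rw [hQR _ _ hj hk]
        exact (hfill j k).2 ⟨hj, hk⟩
      · simp [hQN _ _ hj hk]
end

section
/- Let P be a partial Latin square of order n whose set of filled cells is exactly M' × [n] for some set of rows M' ⊆ [n] (i.e., P is a Latin rectangle occupying the rows of M' and all n columns). Then P extends to a complete Latin square of order n. -/
/-- The rows of the array `f` (rows × columns to symbols) indexed by `M` form a Latin rectangle.
Partiality is encoded by `M`: the values of `f` in other rows are irrelevant. -/
def IsLatinOn {α : Type*} (M : Finset α) (f : α → α → α) : Prop :=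
  (∀ j ∈ M, Function.Injective (f j)) ∧
  (∀ j ∈ M, ∀ j' ∈ M, ∀ k, f j k = f j' k → j = j')

/-- Hall's theorem provides a row compatible with a Latin rectangle that does not yet fill all
rows. -/
lemma IsLatinOn.exists_new_row {α : Type*} [Fintype α] [DecidableEq α] {M : Finset α}
    {f : α → α → α} (h : IsLatinOn M f) (hM : 0 < Mᶜ.card) :
    ∃ e : α → α, Function.Injective e ∧ ∀ j ∈ M, ∀ k, f j k ≠ e k := by
  obtain ⟨hrow, hcol⟩ := h
  -- `A k` is the set of symbols missing from column `k`.
  let A : α → Finset α := fun k => (M.image fun j => f j k)ᶜ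
  have hA : ∀ k, Mᶜ.card ≤ (A k).card := fun k => by
    simp only [A, Finset.card_compl]
    have := Finset.card_image_le (s := M) (f := fun j => f j k)
    omega
  have hB : ∀ s, (Finset.univ.filter fun k => s ∈ A k).card ≤ Mᶜ.card := fun s => by
    -- `g j` is the column in which the filled row `j` contains `s`.
    have hsurj : ∀ j : α, ∃ k, j ∈ M → f j k = s := fun j => by
      by_cases hj : j ∈ M
      · obtain ⟨k, hk⟩ := Finite.surjective_of_injective (hrow j hj) s
        exact ⟨k, fun _ => hk⟩
      · exact ⟨j, fun h => absurd h hj⟩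
    choose g hg using hsurj
    have hginj : Set.InjOn g M := fun j hj j' hj' hjj =>
      hcol j hj j' hj' (g j) (by rw [hg j hj, hjj, hg j' hj'])
    have hsub : (Finset.univ.filter fun k => s ∈ A k) ⊆ (M.image g)ᶜ := by
      intro k hk
      simp only [A, Finset.mem_filter, Finset.mem_univ, true_and, Finset.mem_compl,
        Finset.mem_image, not_exists, not_and] at hk ⊢
      rintro j hj rfl
      exact hk j hj (hg j hj)
    calc _ ≤ _ := Finset.card_le_card hsub
      _ = Mᶜ.card := by
        rw [Finset.card_compl, Finset.card_compl, Finset.card_image_of_injOn hginj]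
  have hall : ∀ T : Finset α, T.card ≤ (T.biUnion A).card := fun T => by
    refine Nat.le_of_mul_le_mul_right ?_ hM
    refine Finset.card_mul_le_card_mul (fun k s => s ∈ A k) (fun k hk => ?_) (fun s _ => ?_)
    · refine (hA k).trans (Finset.card_le_card fun s hs => ?_)
      exact Finset.mem_filter.mpr ⟨Finset.mem_biUnion.mpr ⟨k, hk, hs⟩, hs⟩
    · exact (Finset.card_le_card (Finset.filter_subset_filter _ (Finset.subset_univ T))).trans
        (hB s)
  obtain ⟨e, he, heA⟩ := (Finset.all_card_le_biUnion_card_iff_exists_injective A).mp hall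
  refine ⟨e, he, fun j hj k hjk => ?_⟩
  exact Finset.mem_compl.mp (heA k) (Finset.mem_image.mpr ⟨j, hj, hjk⟩)

lemma IsLatinOn.exists_completion {α : Type*} [Fintype α] [DecidableEq α] {M : Finset α}
    {f : α → α → α} (h : IsLatinOn M f) :
    ∃ g : α → α → α, (∀ j ∈ M, g j = f j) ∧ IsLatinOn Finset.univ g := by
  induction hd : Mᶜ.card generalizing M f with
  | zero =>
    obtain rfl : M = Finset.univ := by simpa using hd
    exact ⟨f, fun _ _ => rfl, h⟩
  | succ d ih =>
    obtain ⟨e, he, hne⟩ := h.exists_new_row (by omega)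
    obtain ⟨r, hr⟩ := Finset.card_pos.mp (show 0 < Mᶜ.card by omega)
    have hrM : r ∉ M := Finset.mem_compl.mp hr
    have hold : ∀ j ∈ M, Function.update f r e j = f j := fun j hj =>
      Function.update_of_ne (ne_of_mem_of_not_mem hj hrM) _ _
    have hnew : IsLatinOn (insert r M) (Function.update f r e) := by
      refine ⟨fun j hj => ?_, fun j hj j' hj' k hk => ?_⟩
      · rcases Finset.mem_insert.mp hj with rfl | hj
        · simpa using he
        · rw [hold j hj]
          exact h.1 j hj
      · rcases Finset.mem_insert.mp hj with rfl | hjM <;>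
          rcases Finset.mem_insert.mp hj' with rfl | hjM'
        · rfl
        · rw [hold j' hjM', Function.update_self] at hk
          exact absurd hk.symm (hne j' hjM' k)
        · rw [hold j hjM, Function.update_self] at hk
          exact absurd hk (hne j hjM k)
        · rw [hold j hjM, hold j' hjM'] at hk
          exact h.2 j hjM j' hjM' k hk
    obtain ⟨g, hg, hlatin⟩ := ih hnew (by
      have := Finset.card_insert_of_notMem hrM
      rw [Finset.card_compl] at hd ⊢
      omega)
    exact ⟨g, fun j hj => (hg j (Finset.mem_insert_of_mem hj)).trans (hold j hj), hlatin⟩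

/-- Latin rectangle completion: if the filled cells of `P` are
exactly `M' × [n]` for some set of rows `M'`, then `P` extends to a complete
Latin square of order `n`. -/
theorem stmt_6 (n : ℕ) (P : Fin n → Fin n → Option (Fin n)) (hP : IsPLS n P)
    (M' : Finset (Fin n))
    (hfill : ∀ j k, (P j k).isSome ↔ j ∈ M') :
    ∃ Q : Fin n → Fin n → Option (Fin n), IsPLS n Q ∧ PLSExtends n P Q ∧
      ∀ j k, (Q j k).isSome := by
  obtain ⟨hrow, hcol⟩ := hP
  -- The default symbol `j` is arbitrary: it occurs only in the empty rows.
  have hP' : ∀ j ∈ M', ∀ k, P j k = some ((P j k).getD j) := fun j hj k => by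
    obtain ⟨s, hs⟩ := Option.isSome_iff_exists.mp ((hfill j k).mpr hj)
    simp [hs]
  obtain ⟨g, hg, hgrow, hgcol⟩ := IsLatinOn.exists_completion (M := M')
    (f := fun j k => (P j k).getD j)
    ⟨fun j hj k k' h => hrow j k k' _ (hP' j hj k) ((hP' j hj k').trans (congrArg some h.symm)),
      fun j hj j' hj' k h =>
        hcol j j' k _ (hP' j hj k) ((hP' j' hj' k).trans (congrArg some h.symm))⟩
  refine ⟨fun j k => some (g j k), ⟨?_, ?_⟩, ?_, fun _ _ => rfl⟩
  · intro j k k' s h h'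
    exact hgrow j (Finset.mem_univ j) (Option.some_injective _ (h.trans h'.symm))
  · intro j j' k s h h'
    exact hgcol j (Finset.mem_univ j) j' (Finset.mem_univ j') k
      (Option.some_injective _ (h.trans h'.symm))
  · intro j k s h
    have hj : j ∈ M' := (hfill j k).mp (by simp [h])
    simp [hg j hj, h]
end

section
/- Let n ≥ 1 and consider an LSA instance of order n. For every partial allocation A there exists a complete allocation Ā whose utilitarian social welfare is at least one quarter of the utilitarian social welfare of A, i.e., ∑_{i∈N} v_i(Ā_i) ≥ (1/4) · ∑_{i∈N} v_i(A_i). -/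
/-!
If some agent-item pair is unassigned in `A`, the pairs assigned by `A` can be covered by four
rectangles `R × S` with `|R| + |S| ≤ n`: four `m × m` blocks when `n = 2m`, and a pinwheel of four
`m × (m+1)` blocks around the unassigned pair when `n = 2m + 1`. One of them carries at least a
quarter of the welfare, and since values are nonnegative it suffices to extend the part of `A` inside
it to a complete allocation (`exists_of_cover`). If every pair is assigned, `A` itself is complete.

For the extension (`exists_complete`), view allocations as partial Latin squares with agents as rows,
items as columns and rounds as symbols. The condition `|R| + |S| ≤ n` lets one fill the
rectangle greedily (`exists_filled`). The filled rectangle is then extended by Ryser's argument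
(`extend_columns`), first to all columns and then, with the roles of rows and columns exchanged, to
all rows. Each step is a proper edge colouring of the bipartite graph of pairs (row, missing symbol)
by the unused columns. Such a colouring exists by König's theorem (`exists_edge_colouring`), which
is proved here by repeatedly removing a matching that covers the vertices of maximum degree; the
matching comes from Birkhoff's theorem on doubly stochastic matrices (`exists_matching`).
-/

/-- A feasible partial allocation of an LSA instance of order `n`:
a set of triples (agent `i`, item `j`, round `k`) such that each agent receives
each item at most once, each agent receives at most one item per round, and
each item goes to at most one agent per round. -/
def IsPartialAlloc (n : ℕ) (A : Finset (Fin n × Fin n × Fin n)) : Prop :=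
  (∀ i j k k', (i, j, k) ∈ A → (i, j, k') ∈ A → k = k') ∧
  (∀ i j j' k, (i, j, k) ∈ A → (i, j', k) ∈ A → j = j') ∧
  (∀ i i' j k, (i, j, k) ∈ A → (i', j, k) ∈ A → i = i')

/-- A complete allocation: a feasible partial allocation with `n²` triples. -/
def IsCompleteAlloc (n : ℕ) (A : Finset (Fin n × Fin n × Fin n)) : Prop :=
  IsPartialAlloc n A ∧ A.card = n ^ 2

/-- `v_i(A_i)`: the total value agent `i` receives under allocation `A`. -/
noncomputable def agentVal {n : ℕ} (v : Fin n → Fin n → Fin n → ℝ)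
    (A : Finset (Fin n × Fin n × Fin n)) (i : Fin n) : ℝ :=
  ∑ t ∈ A.filter (fun t => t.1 = i), v t.1 t.2.1 t.2.2

/-! ### Edge colourings of bipartite graphs -/

/-- A nonnegative real matrix with constant positive row and column sums has a positive diagonal. -/
theorem exists_perm_ne_zero {ι : Type*} [Fintype ι] [DecidableEq ι] (M : Matrix ι ι ℝ) (D : ℝ)
    (hD : 0 < D) (hnn : ∀ x y, 0 ≤ M x y) (hrow : ∀ x, ∑ y, M x y = D)
    (hcol : ∀ y, ∑ x, M x y = D) : ∃ σ : Equiv.Perm ι, ∀ x, M x (σ x) ≠ 0 := by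
  have hM : D⁻¹ • M ∈ doublyStochastic ℝ ι := by
    refine mem_doublyStochastic_iff_sum.2 ⟨fun x y => ?_, fun x => ?_, fun y => ?_⟩
    · exact mul_nonneg (inv_nonneg.2 hD.le) (hnn x y)
    · simp only [Matrix.smul_apply, smul_eq_mul, ← Finset.mul_sum, hrow]
      exact inv_mul_cancel₀ hD.ne'
    · simp only [Matrix.smul_apply, smul_eq_mul, ← Finset.mul_sum, hcol]
      exact inv_mul_cancel₀ hD.ne'
  obtain ⟨w, hw0, hw1, hw⟩ := exists_eq_sum_perm_of_mem_doublyStochastic hM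
  obtain ⟨σ, -, hσ⟩ := Finset.exists_ne_zero_of_sum_ne_zero (hw1.trans_ne one_ne_zero)
  refine ⟨σ, fun x hx => hσ ?_⟩
  have h := congrFun (congrFun hw x) (σ x)
  simp only [Matrix.sum_apply, Matrix.smul_apply, smul_eq_mul, hx, mul_zero] at h
  have hdiag := (Finset.sum_eq_zero_iff_of_nonneg fun τ _ => mul_nonneg (hw0 τ) (by
    simp only [Equiv.Perm.permMatrix, PEquiv.toMatrix_apply]; split_ifs <;> norm_num)).1 h σ
    (Finset.mem_univ σ)
  simpa [Equiv.Perm.permMatrix, PEquiv.toMatrix_apply, Equiv.toPEquiv_apply] using hdiag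

/-- A bipartite graph `E` of maximum degree at most `D` has a matching that covers every vertex of
degree exactly `D`. The matrix `D • 1 - deg + adj` on the disjoint union of the two sides has all
row and column sums equal to `D`, so it has a positive diagonal; its diagonal entries vanish at the
vertices of degree `D`, which are therefore matched along edges. -/
theorem exists_matching {α β : Type*} [Fintype α] [Fintype β] (E : α → β → Prop) (D : ℕ)
    (hD : 0 < D) (hα : ∀ a, {b | E a b}.ncard ≤ D) (hβ : ∀ b, {a | E a b}.ncard ≤ D) :
    ∃ F : α → β → Prop, (∀ a b, F a b → E a b) ∧
      (∀ a b b', F a b → F a b' → b = b') ∧ (∀ a a' b, F a b → F a' b → a = a') ∧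
      (∀ a, {b | E a b}.ncard = D → ∃ b, F a b) ∧
      (∀ b, {a | E a b}.ncard = D → ∃ a, F a b) := by
  classical
  obtain ⟨M, h₁₁, h₁₂, h₂₁, h₂₂⟩ : ∃ M : Matrix (α ⊕ β) (α ⊕ β) ℝ,
      (∀ a a', M (.inl a) (.inl a') = if a = a' then (D : ℝ) - {b | E a b}.ncard else 0) ∧
      (∀ a b, M (.inl a) (.inr b) = if E a b then 1 else 0) ∧
      (∀ b a, M (.inr b) (.inl a) = if E a b then 1 else 0) ∧
      (∀ b b', M (.inr b) (.inr b') = if b = b' then (D : ℝ) - {a | E a b}.ncard else 0) :=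
    ⟨Matrix.fromBlocks
      (fun a a' => if a = a' then (D : ℝ) - {b | E a b}.ncard else 0)
      (fun a b => if E a b then 1 else 0) (fun b a => if E a b then 1 else 0)
      (fun b b' => if b = b' then (D : ℝ) - {a | E a b}.ncard else 0),
      fun _ _ => rfl, fun _ _ => rfl, fun _ _ => rfl, fun _ _ => rfl⟩
  have hsymm : ∀ x y, M x y = M y x := by
    rintro (a | b) (a' | b') <;> simp only [h₁₁, h₁₂, h₂₁, h₂₂] <;> grind
  have hnn : ∀ x y, 0 ≤ M x y := by
    rintro (a | b) (a' | b') <;> simp only [h₁₁, h₁₂, h₂₁, h₂₂] <;> split_ifs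
    any_goals norm_num
    · exact hα a
    · exact hβ b
  have hrow : ∀ x, ∑ y, M x y = D := by
    rintro (a | b)
    · simp [h₁₁, h₁₂, Set.ncard_eq_toFinset_card']
    · simp [h₂₁, h₂₂, Set.ncard_eq_toFinset_card']
  obtain ⟨σ, hσ⟩ := exists_perm_ne_zero M D (by exact_mod_cast hD) hnn hrow
    fun y => by simpa only [hsymm _ y] using hrow y
  have hσ' : ∀ x y, σ x = y → M x y ≠ 0 := fun x y h => h ▸ hσ x
  refine ⟨fun a b => σ (.inl a) = .inr b, fun a b h => ?_, fun a b b' h h' => ?_,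
    fun a a' b h h' => ?_, fun a h => ?_, fun b h => ?_⟩
  · by_contra hE
    exact hσ' _ _ h (by simp [h₁₂, hE])
  · exact Sum.inr_injective (h.symm.trans h')
  · exact Sum.inl_injective (σ.injective (h.trans h'.symm))
  · rcases hx : σ (.inl a) with a' | b
    · exact (hσ' _ _ hx (by simp [h₁₁, h])).elim
    · exact ⟨b, hx⟩
  · obtain ⟨x, hx⟩ := σ.surjective (.inr b)
    rcases x with a | b'
    · exact ⟨a, hx⟩
    · refine (hσ' _ _ hx ?_).elim
      rw [h₂₂]
      split_ifs with hb
      · rw [hb, h, sub_self]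
      · rfl

/-- König's edge-colouring theorem: if every vertex of the bipartite graph `E` has degree at most
`C.card`, then the edges of `E` can be properly coloured with colours from `C`. -/
theorem exists_edge_colouring {α β γ : Type*} [Fintype α] [Fintype β] [Nonempty γ]
    (C : Finset γ) (E : α → β → Prop)
    (hα : ∀ a, {b | E a b}.ncard ≤ C.card) (hβ : ∀ b, {a | E a b}.ncard ≤ C.card) :
    ∃ c : α → β → γ, (∀ a b, E a b → c a b ∈ C) ∧
      (∀ a b b', E a b → E a b' → c a b = c a b' → b = b') ∧
      (∀ a a' b, E a b → E a' b → c a b = c a' b → a = a') := by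
  classical
  induction C using Finset.induction_on generalizing E with
  | empty =>
    have hE : ∀ a b, ¬ E a b := fun a b h => by
      have h0 := hα a
      rw [Finset.card_empty, Nat.le_zero, Set.ncard_eq_zero (Set.toFinite _)] at h0
      exact (h0 ▸ h : b ∈ (∅ : Set β))
    exact ⟨fun _ _ => Classical.arbitrary γ, fun a b h => (hE a b h).elim,
      fun a b _ h => (hE a b h).elim, fun a _ b h => (hE a b h).elim⟩
  | insert x C hx ih =>
    rw [Finset.card_insert_of_notMem hx] at hα hβ
    obtain ⟨F, hFE, hF1, hF2, hFα, hFβ⟩ := exists_matching E _ C.card.succ_pos hα hβ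
    -- Deleting the matching lowers the degree of every vertex of maximum degree.
    obtain ⟨c, hc, hc1, hc2⟩ := ih (fun a b => E a b ∧ ¬ F a b)
      (fun a => by
        rcases (hα a).lt_or_eq with h | h
        · exact (Set.ncard_le_ncard (fun b hb => hb.1)).trans (Nat.lt_succ_iff.1 h)
        · obtain ⟨b, hb⟩ := hFα a h
          refine Nat.lt_succ_iff.1 (lt_of_lt_of_eq (Set.ncard_lt_ncard ?_) h)
          exact ⟨fun b hb => hb.1, fun hs => (hs (hFE a b hb)).2 hb⟩)
      (fun b => by
        rcases (hβ b).lt_or_eq with h | h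
        · exact (Set.ncard_le_ncard (fun b hb => hb.1)).trans (Nat.lt_succ_iff.1 h)
        · obtain ⟨a, ha⟩ := hFβ b h
          refine Nat.lt_succ_iff.1 (lt_of_lt_of_eq (Set.ncard_lt_ncard ?_) h)
          exact ⟨fun b hb => hb.1, fun hs => (hs (hFE a b ha)).2 ha⟩)
    have hcx : ∀ a b, E a b → ¬ F a b → c a b ≠ x := fun a b h h' e => hx (e ▸ hc a b ⟨h, h'⟩)
    refine ⟨fun a b => if F a b then x else c a b, fun a b h => ?_, fun a b b' h h' e => ?_,
      fun a a' b h h' e => ?_⟩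
    · by_cases hF : F a b
      · simp [hF]
      · simpa [hF] using Or.inr (hc a b ⟨h, hF⟩)
    · by_cases hF : F a b <;> by_cases hF' : F a b' <;> simp only [hF, hF', if_true, if_false] at e
      · exact hF1 a b b' hF hF'
      · exact (hcx a b' h' hF' e.symm).elim
      · exact (hcx a b h hF e).elim
      · exact hc1 a b b' ⟨h, hF⟩ ⟨h', hF'⟩ e
    · by_cases hF : F a b <;> by_cases hF' : F a' b <;> simp only [hF, hF', if_true, if_false] at e
      · exact hF2 a a' b hF hF'
      · exact (hcx a' b h' hF' e.symm).elim
      · exact (hcx a b h hF e).elim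
      · exact hc2 a a' b ⟨h, hF⟩ ⟨h', hF'⟩ e

/-! ### Completing partial Latin squares -/

/-- The relation form of `IsPartialAlloc`: any two coordinates of a triple in `P` determine the
third. Equivalently, `P` is a partial Latin square with rows `i`, columns `j` and symbols `k`. -/
def IsLatin {n : ℕ} (P : Fin n → Fin n → Fin n → Prop) : Prop :=
  (∀ i j k k', P i j k → P i j k' → k = k') ∧
  (∀ i j j' k, P i j k → P i j' k → j = j') ∧
  (∀ i i' j k, P i j k → P i' j k → i = i')

theorem IsLatin.swap {n : ℕ} {P : Fin n → Fin n → Fin n → Prop} (hP : IsLatin P) :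
    IsLatin fun j i k => P i j k :=
  ⟨fun j i => hP.1 i j, fun j i i' k => hP.2.2 i i' j k, fun j l i k => hP.2.1 i j l k⟩

/-- The number of `k` not related to any element of `S`, when the elements of `S` are related to
pairwise distinct values. -/
theorem ncard_unrelated_le {n : ℕ} (Q : Fin n → Fin n → Prop) (S : Finset (Fin n))
    (hQ : ∀ j j' k, Q j k → Q j' k → j = j') (hS : ∀ j ∈ S, ∃ k, Q j k) :
    {k | ∀ j, ¬ Q j k}.ncard ≤ Sᶜ.card := by
  classical
  choose! f hf using hS
  have hinj : Set.InjOn f S := fun j hj j' hj' h => hQ j j' (f j) (hf j hj) (h ▸ hf j' hj')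
  have hsub : {k | ∀ j, ¬ Q j k} ⊆ ((S.image f)ᶜ : Finset (Fin n)) := by
    intro k hk
    simp only [Finset.coe_compl, Finset.coe_image, Set.mem_compl_iff, Set.mem_image,
      Finset.mem_coe, not_exists, not_and]
    rintro j hj rfl
    exact hk j (hf j hj)
  refine (Set.ncard_le_ncard hsub).trans_eq ?_
  rw [Set.ncard_coe_finset, Finset.card_compl, Finset.card_compl, Finset.card_image_of_injOn hinj]

/-- Ryser's extension step. A Latin rectangle with rows `R` and columns `S` extends to all columns
as soon as every symbol is missing from at most `n - |S|` of the rows: colour the pairs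
(row, symbol missing from that row) with the unused columns. -/
theorem extend_columns {n : ℕ} (P : Fin n → Fin n → Fin n → Prop) (hP : IsLatin P)
    (R S : Finset (Fin n)) (hR : ∀ i j k, P i j k → i ∈ R) (hS : ∀ i j k, P i j k → j ∈ S)
    (hfill : ∀ i ∈ R, ∀ j ∈ S, ∃ k, P i j k)
    (hdeg : ∀ k, {i | i ∈ R ∧ ∀ j, ¬ P i j k}.ncard ≤ Sᶜ.card) :
    ∃ P' : Fin n → Fin n → Fin n → Prop, IsLatin P' ∧ (∀ i j k, P i j k → P' i j k) ∧
      (∀ i j k, P' i j k → i ∈ R) ∧ (∀ i ∈ R, ∀ k, ∃ j, P' i j k) ∧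
      (∀ i ∈ R, ∀ j, ∃ k, P' i j k) := by
  classical
  rcases isEmpty_or_nonempty (Fin n) with hn | hn
  · exact ⟨P, hP, fun _ _ _ h => h, hR, fun i => (hn.false i).elim, fun i => (hn.false i).elim⟩
  obtain ⟨c, hc, hc1, hc2⟩ := exists_edge_colouring Sᶜ (fun i k => i ∈ R ∧ ∀ j, ¬ P i j k)
    (fun i => by
      by_cases hi : i ∈ R
      · simpa only [hi, true_and] using
          ncard_unrelated_le (P i) S (fun j j' k => hP.2.1 i j j' k) (hfill i hi)
      · simp [hi]) hdeg
  have hc' : ∀ i j k, (i ∈ R ∧ ∀ j, ¬ P i j k) → c i k = j → j ∉ S := by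
    rintro i j k h rfl
    exact Finset.mem_compl.1 (hc i k h)
  have hL : IsLatin fun i j k => P i j k ∨ ((i ∈ R ∧ ∀ j, ¬ P i j k) ∧ c i k = j) := by
    refine ⟨?_, ?_, ?_⟩
    · rintro i j k k' (h | ⟨h, e⟩) (h' | ⟨h', e'⟩)
      · exact hP.1 i j k k' h h'
      · exact (hc' i j k' h' e' (hS i j k h)).elim
      · exact (hc' i j k h e (hS i j k' h')).elim
      · exact hc1 i k k' h h' (e.trans e'.symm)
    · rintro i j j' k (h | ⟨h, e⟩) (h' | ⟨h', e'⟩)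
      · exact hP.2.1 i j j' k h h'
      · exact (h'.2 j h).elim
      · exact (h.2 j' h').elim
      · exact e.symm.trans e'
    · rintro i i' j k (h | ⟨h, e⟩) (h' | ⟨h', e'⟩)
      · exact hP.2.2 i i' j k h h'
      · exact (hc' i' j k h' e' (hS i j k h)).elim
      · exact (hc' i j k h e (hS i' j k h')).elim
      · exact hc2 i i' k h h' (e.trans e'.symm)
  have hsym : ∀ i ∈ R, ∀ k, ∃ j, P i j k ∨ ((i ∈ R ∧ ∀ j, ¬ P i j k) ∧ c i k = j) := by
    intro i hi k
    by_cases h : ∃ j, P i j k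
    · exact h.imp fun j => Or.inl
    · exact ⟨c i k, Or.inr ⟨⟨hi, not_exists.1 h⟩, rfl⟩⟩
  refine ⟨_, hL, fun i j k => Or.inl, ?_, hsym, fun i hi => ?_⟩
  · rintro i j k (h | h)
    exacts [hR i j k h, h.1.1]
  · -- The map sending a symbol to its column in row `i` is injective, hence surjective.
    choose f hf using hsym i hi
    have hinj : Function.Injective f := fun k k' h => hL.1 i (f k) k k' (hf k) (h ▸ hf k')
    intro j
    obtain ⟨k, rfl⟩ := (Finite.injective_iff_surjective.1 hinj) j
    exact ⟨k, hf k⟩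

theorem card_eq_of_filled {n : ℕ} (A : Finset (Fin n × Fin n × Fin n)) (hA : IsPartialAlloc n A)
    (hfill : ∀ i j, ∃ k, (i, j, k) ∈ A) : A.card = n ^ 2 := by
  classical
  have h : A.card = (Finset.univ : Finset (Fin n × Fin n)).card := by
    refine Finset.card_bij (fun t _ => (t.1, t.2.1)) (fun _ _ => Finset.mem_univ _) ?_ ?_
    · rintro ⟨i, j, k⟩ h ⟨i', j', k'⟩ h' e
      obtain ⟨rfl, rfl⟩ := Prod.mk.inj e
      rw [hA.1 i j k k' h h']
    · rintro ⟨i, j⟩ -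
      obtain ⟨k, hk⟩ := hfill i j
      exact ⟨(i, j, k), hk, rfl⟩
  rw [h, Finset.card_univ, Fintype.card_prod, Fintype.card_fin, sq]

/-- If `|R| + |S| ≤ n`, a partial allocation inside `R × S` can be enlarged until every cell of
`R × S` is filled: an empty cell sees at most `(|S| - 1) + (|R| - 1) < n` symbols. -/
theorem exists_filled {n : ℕ} (A : Finset (Fin n × Fin n × Fin n)) (hA : IsPartialAlloc n A)
    (R S : Finset (Fin n)) (hcard : R.card + S.card ≤ n)
    (hRS : ∀ i j k, (i, j, k) ∈ A → i ∈ R ∧ j ∈ S) :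
    ∃ B, A ⊆ B ∧ IsPartialAlloc n B ∧ (∀ i j k, (i, j, k) ∈ B → i ∈ R ∧ j ∈ S) ∧
      ∀ i ∈ R, ∀ j ∈ S, ∃ k, (i, j, k) ∈ B := by
  classical
  obtain ⟨B, hB, hmax⟩ := Finset.exists_max_image
    (Finset.univ.filter fun B : Finset (Fin n × Fin n × Fin n) =>
      A ⊆ B ∧ IsPartialAlloc n B ∧ ∀ i j k, (i, j, k) ∈ B → i ∈ R ∧ j ∈ S) Finset.card
    ⟨A, by simpa using ⟨hA, fun i j k => hRS i j k⟩⟩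
  obtain ⟨-, hAB, hBL, hBRS⟩ := Finset.mem_filter.1 hB
  refine ⟨B, hAB, hBL, hBRS, fun i hi j hj => ?_⟩
  by_contra! hempty
  -- The symbols in row `i` and in column `j`.
  have hrow : (Finset.univ.filter fun k => ∃ j', (i, j', k) ∈ B).card ≤ (S.erase j).card := by
    refine Finset.card_le_card_of_forall_subsingleton (fun k j' => (i, j', k) ∈ B) ?_ ?_
    · intro k hk
      obtain ⟨j', h⟩ := (Finset.mem_filter.1 hk).2
      exact ⟨j', Finset.mem_erase.2 ⟨fun e => hempty k (e ▸ h), (hBRS _ _ _ h).2⟩, h⟩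
    · rintro j' - k hk k' hk'
      exact hBL.1 i j' k k' hk.2 hk'.2
  have hcol : (Finset.univ.filter fun k => ∃ i', (i', j, k) ∈ B).card ≤ (R.erase i).card := by
    refine Finset.card_le_card_of_forall_subsingleton (fun k i' => (i', j, k) ∈ B) ?_ ?_
    · intro k hk
      obtain ⟨i', h⟩ := (Finset.mem_filter.1 hk).2
      exact ⟨i', Finset.mem_erase.2 ⟨fun e => hempty k (e ▸ h), (hBRS _ _ _ h).1⟩, h⟩
    · rintro i' - k hk k' hk'
      exact hBL.1 i' j k k' hk.2 hk'.2
  rw [Finset.card_erase_of_mem hj] at hrow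
  rw [Finset.card_erase_of_mem hi] at hcol
  have hR0 := Finset.card_pos.2 ⟨i, hi⟩
  obtain ⟨k, hk⟩ : ∃ k, k ∉ (Finset.univ.filter fun k => ∃ j', (i, j', k) ∈ B) ∪
      (Finset.univ.filter fun k => ∃ i', (i', j, k) ∈ B) := by
    by_contra! hall
    have h1 := Finset.card_union_le (Finset.univ.filter fun k => ∃ j', (i, j', k) ∈ B)
      (Finset.univ.filter fun k => ∃ i', (i', j, k) ∈ B)
    rw [Finset.eq_univ_iff_forall.2 hall, Finset.card_univ, Fintype.card_fin] at h1
    omega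
  simp only [Finset.mem_union, Finset.mem_filter, Finset.mem_univ, true_and, not_or,
    not_exists] at hk
  have hnew : insert (i, j, k) B ∈ Finset.univ.filter fun B : Finset (Fin n × Fin n × Fin n) =>
      A ⊆ B ∧ IsPartialAlloc n B ∧ ∀ i j k, (i, j, k) ∈ B → i ∈ R ∧ j ∈ S := by
    refine Finset.mem_filter.2 ⟨Finset.mem_univ _, hAB.trans (Finset.subset_insert _ _), ?_, ?_⟩
    · obtain ⟨h1, h2, h3⟩ := hBL
      obtain ⟨hk1, hk2⟩ := hk
      simp only [IsPartialAlloc, Finset.mem_insert, Prod.mk.injEq]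
      refine ⟨?_, ?_, ?_⟩
      · rintro a b x y (⟨rfl, rfl, rfl⟩ | h) (⟨e1, e2, e3⟩ | h')
        · exact e3.symm
        · exact (hempty y h').elim
        · subst e1 e2; exact (hempty x h).elim
        · exact h1 a b x y h h'
      · rintro a x y b (⟨rfl, rfl, rfl⟩ | h) (⟨e1, e2, e3⟩ | h')
        · exact e2.symm
        · exact (hk1 y h').elim
        · subst e1 e3; exact (hk1 x h).elim
        · exact h2 a x y b h h'
      · rintro x y a b (⟨rfl, rfl, rfl⟩ | h) (⟨e1, e2, e3⟩ | h')
        · exact e1.symm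
        · exact (hk2 y h').elim
        · subst e2 e3; exact (hk2 x h).elim
        · exact h3 x y a b h h'
    · simp only [Finset.mem_insert, Prod.mk.injEq]
      rintro a b x (⟨rfl, rfl, rfl⟩ | h)
      exacts [⟨hi, hj⟩, hBRS a b x h]
  have := hmax _ hnew
  rw [Finset.card_insert_of_notMem (hempty k)] at this
  omega

/-- A partial allocation inside `R × S` with `|R| + |S| ≤ n` extends to a complete allocation:
fill `R × S`, then add the missing columns to the rows `R`, then the missing rows. -/
theorem exists_complete {n : ℕ} (A : Finset (Fin n × Fin n × Fin n)) (hA : IsPartialAlloc n A)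
    (R S : Finset (Fin n)) (hcard : R.card + S.card ≤ n)
    (hRS : ∀ i j k, (i, j, k) ∈ A → i ∈ R ∧ j ∈ S) :
    ∃ B, A ⊆ B ∧ IsCompleteAlloc n B := by
  classical
  obtain ⟨B, hAB, hB, hBRS, hfill⟩ := exists_filled A hA R S hcard hRS
  obtain ⟨P, hP, hBP, hPR, hPsym, hPfill⟩ := extend_columns (fun i j k => (i, j, k) ∈ B) hB R S
    (fun i j k h => (hBRS i j k h).1) (fun i j k h => (hBRS i j k h).2) hfill (fun k => by
      refine (Set.ncard_le_ncard (t := (R : Set (Fin n))) fun i hi => hi.1).trans ?_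
      rw [Set.ncard_coe_finset, Finset.card_compl, Fintype.card_fin]
      omega)
  -- Every symbol occurs once in each row of `R`, so it is missing from `n - |R|` columns.
  obtain ⟨Q, hQ, hPQ, -, -, hQfill⟩ := extend_columns (fun j i k => P i j k) hP.swap Finset.univ R
    (fun _ _ _ _ => Finset.mem_univ _) (fun j i k h => hPR i j k h)
    (fun j _ i hi => hPfill i hi j) (fun k => by
      simpa only [Finset.mem_univ, true_and] using
        ncard_unrelated_le (fun i j => P i j k) R (fun i i' j => hP.2.2 i i' j k)
          (fun i hi => hPsym i hi k))
  have hC : IsPartialAlloc n (Finset.univ.filter fun t => Q t.2.1 t.1 t.2.2) := by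
    simpa only [IsLatin, IsPartialAlloc, Finset.mem_filter, Finset.mem_univ, true_and] using hQ.swap
  refine ⟨_, fun t ht => ?_, hC, card_eq_of_filled _ hC fun i j => ?_⟩
  · exact Finset.mem_filter.2 ⟨Finset.mem_univ _, hPQ _ _ _ (hBP _ _ _ (hAB ht))⟩
  · simpa using hQfill j (Finset.mem_univ _) i

/-! ### Covering by four rectangles -/

theorem sum_agentVal {n : ℕ} (v : Fin n → Fin n → Fin n → ℝ)
    (A : Finset (Fin n × Fin n × Fin n)) :
    ∑ i, agentVal v A i = ∑ t ∈ A, v t.1 t.2.1 t.2.2 := by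
  simp only [agentVal]
  exact Finset.sum_fiberwise A (fun t => t.1) fun t => v t.1 t.2.1 t.2.2

/-- If four rectangles of semiperimeter at most `n` cover the cells of `A`, the one carrying the
most welfare extends to a complete allocation worth at least a quarter of `A`. -/
theorem exists_of_cover {n : ℕ} (v : Fin n → Fin n → Fin n → ℝ) (hv : ∀ i j k, 0 ≤ v i j k)
    (A : Finset (Fin n × Fin n × Fin n)) (hA : IsPartialAlloc n A)
    (R S : Fin 4 → Finset (Fin n)) (hcard : ∀ q, (R q).card + (S q).card ≤ n)
    (hcov : ∀ i j k, (i, j, k) ∈ A → ∃ q, i ∈ R q ∧ j ∈ S q) :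
    ∃ B, IsCompleteAlloc n B ∧ ∑ i, agentVal v B i ≥ (1 / 4) * ∑ i, agentVal v A i := by
  classical
  set W : Fin 4 → ℝ := fun q =>
    ∑ t ∈ A.filter (fun t => t.1 ∈ R q ∧ t.2.1 ∈ S q), v t.1 t.2.1 t.2.2 with hW
  have hsum : ∑ t ∈ A, v t.1 t.2.1 t.2.2 ≤ ∑ q, W q := by
    simp only [hW, Finset.sum_filter]
    rw [Finset.sum_comm]
    refine Finset.sum_le_sum fun t ht => ?_
    obtain ⟨q, hq⟩ := hcov t.1 t.2.1 t.2.2 ht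
    refine le_trans (by rw [if_pos hq]) (Finset.single_le_sum (f := fun q =>
      if t.1 ∈ R q ∧ t.2.1 ∈ S q then v t.1 t.2.1 t.2.2 else 0) (fun q _ => ?_)
      (Finset.mem_univ q))
    split_ifs
    exacts [hv _ _ _, le_rfl]
  obtain ⟨q, -, hq⟩ := Finset.exists_max_image Finset.univ W Finset.univ_nonempty
  have h4 : ∑ q, W q ≤ 4 * W q := by
    simpa using Finset.sum_le_card_nsmul Finset.univ W (W q) fun p hp => hq p hp
  obtain ⟨B, hAB, hB⟩ := exists_complete (A.filter fun t => t.1 ∈ R q ∧ t.2.1 ∈ S q)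
    ⟨fun i j k k' h h' => hA.1 i j k k' (Finset.mem_filter.1 h).1 (Finset.mem_filter.1 h').1,
      fun i j j' k h h' => hA.2.1 i j j' k (Finset.mem_filter.1 h).1 (Finset.mem_filter.1 h').1,
      fun i i' j k h h' => hA.2.2 i i' j k (Finset.mem_filter.1 h).1 (Finset.mem_filter.1 h').1⟩
    (R q) (S q) (hcard q) fun i j k h => (Finset.mem_filter.1 h).2
  refine ⟨B, hB, ?_⟩
  have hWB : W q ≤ ∑ t ∈ B, v t.1 t.2.1 t.2.2 :=
    Finset.sum_le_sum_of_subset_of_nonneg hAB fun t _ _ => hv _ _ _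
  rw [sum_agentVal, sum_agentVal]
  linarith

/-- A side of an odd-order grid, with one index `i₀` removed, splits into two halves of equal size. -/
theorem exists_halves {m : ℕ} (i₀ : Fin (2 * m + 1)) : ∃ P Q : Finset (Fin (2 * m + 1)),
    P.card = m ∧ Q.card = m ∧ ∀ i, i = i₀ ∨ i ∈ P ∨ i ∈ Q := by
  have hc : (Finset.univ.erase i₀).card = 2 * m := by
    rw [Finset.card_erase_of_mem (Finset.mem_univ _), Finset.card_univ, Fintype.card_fin]
    omega
  obtain ⟨P, hP, hPc⟩ := Finset.exists_subset_card_eq (s := Finset.univ.erase i₀) (n := m)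
    (by omega)
  refine ⟨P, Finset.univ.erase i₀ \ P, hPc, ?_, fun i => ?_⟩
  · rw [Finset.card_sdiff_of_subset hP]; omega
  · simp only [Finset.mem_sdiff, Finset.mem_erase, Finset.mem_univ]; tauto

/-- for every partial allocation `A` there is a complete allocation
whose utilitarian social welfare is at least a quarter of that of `A`. -/
theorem stmt_7 (n : ℕ) (hn : 1 ≤ n) (v : Fin n → Fin n → Fin n → ℝ)
    (hv : ∀ i j k, 0 ≤ v i j k)
    (A : Finset (Fin n × Fin n × Fin n)) (hA : IsPartialAlloc n A) :
    ∃ B : Finset (Fin n × Fin n × Fin n), IsCompleteAlloc n B ∧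
      ∑ i, agentVal v B i ≥ (1 / 4) * ∑ i, agentVal v A i := by
  classical
  by_cases hfill : ∀ i j, ∃ k, (i, j, k) ∈ A
  · refine ⟨A, ⟨hA, card_eq_of_filled A hA hfill⟩, ?_⟩
    have h0 : 0 ≤ ∑ i, agentVal v A i := by
      rw [sum_agentVal]
      exact Finset.sum_nonneg fun t _ => hv _ _ _
    linarith
  push Not at hfill
  obtain ⟨i₀, j₀, h₀⟩ := hfill
  obtain ⟨m, rfl | rfl⟩ := Nat.even_or_odd' n
  · obtain ⟨P, -, hP⟩ := Finset.exists_subset_card_eq (s := (Finset.univ : Finset (Fin (2 * m))))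
      (n := m) (by rw [Finset.card_univ, Fintype.card_fin]; omega)
    have hP' : Pᶜ.card = m := by rw [Finset.card_compl, hP, Fintype.card_fin]; omega
    refine exists_of_cover v hv A hA ![P, P, Pᶜ, Pᶜ] ![P, Pᶜ, P, Pᶜ] ?_ fun i j k _ => ?_
    · simp [Fin.forall_fin_succ, hP, hP']; omega
    · simp only [Fin.exists_fin_succ]
      by_cases hi : i ∈ P <;> by_cases hj : j ∈ P <;> simp [hi, hj]
  · obtain ⟨P, Q, hP, hQ, hPQ⟩ := exists_halves i₀
    obtain ⟨P', Q', hP', hQ', hPQ'⟩ := exists_halves j₀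
    -- A pinwheel of four `m × (m + 1)` rectangles around the unassigned cell `(i₀, j₀)`.
    refine exists_of_cover v hv A hA ![P, insert i₀ P, Q, insert i₀ Q]
      ![insert j₀ P', Q', insert j₀ Q', P'] ?_ fun i j k h => ?_
    · have h1 := Finset.card_insert_le i₀ P
      have h2 := Finset.card_insert_le i₀ Q
      have h3 := Finset.card_insert_le j₀ P'
      have h4 := Finset.card_insert_le j₀ Q'
      simp only [Fin.forall_fin_succ]
      simp
      omega
    · have hne : ¬ (i = i₀ ∧ j = j₀) := by
        rintro ⟨rfl, rfl⟩
        exact h₀ k h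
      have := hPQ i
      have := hPQ' j
      simp only [Fin.exists_fin_succ]
      simp
      tauto
end

section
/- Consider the LSA instance of order n = 2 with binary valuations v_{1,1,1} = v_{2,2,2} = 1 and v_{1,1,2} = v_{1,2,1} = v_{1,2,2} = v_{2,1,1} = v_{2,1,2} = v_{2,2,1} = 0. Then there exists a partial allocation with utilitarian social welfare 2 and egalitarian social welfare 1, while every complete allocation has utilitarian social welfare exactly 1 and egalitarian social welfare exactly 0. -/
/-- Utilitarian social welfare. -/
noncomputable def usw {n : ℕ} (v : Fin n → Fin n → Fin n → ℝ)
    (A : Finset (Fin n × Fin n × Fin n)) : ℝ :=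
  ∑ i, agentVal v A i

/-- Egalitarian social welfare (order 2, so the index type is nonempty). -/
noncomputable def egal2 (v : Fin 2 → Fin 2 → Fin 2 → ℝ)
    (A : Finset (Fin 2 × Fin 2 × Fin 2)) : ℝ :=
  Finset.univ.inf' Finset.univ_nonempty (agentVal v A)

theorem agentVal_eq (v : Fin 2 → Fin 2 → Fin 2 → ℝ)
    (hv : ∀ i j k, v i j k = if i = j ∧ j = k then 1 else 0)
    (A : Finset (Fin 2 × Fin 2 × Fin 2)) (i : Fin 2) :
    agentVal v A i = if (i, i, i) ∈ A then 1 else 0 := by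
  have h : ∀ t ∈ A, (if t.1 = i then v t.1 t.2.1 t.2.2 else 0)
      = if t = (i, i, i) then (1 : ℝ) else 0 := by
    rintro ⟨a, b, c⟩ -
    simp only [hv, Prod.mk.injEq]
    grind
  rw [agentVal, Finset.sum_filter, Finset.sum_congr rfl h, Finset.sum_ite_eq']

theorem egal2_eq (v : Fin 2 → Fin 2 → Fin 2 → ℝ) (A : Finset (Fin 2 × Fin 2 × Fin 2)) :
    egal2 v A = min (agentVal v A 0) (agentVal v A 1) := by
  apply le_antisymm
  · exact le_min (Finset.inf'_le _ (Finset.mem_univ 0)) (Finset.inf'_le _ (Finset.mem_univ 1))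
  · refine Finset.le_inf' _ _ fun i _ => ?_
    fin_cases i
    · exact min_le_left _ _
    · exact min_le_right _ _

/-- In a complete allocation every agent receives every item in some round, by counting
`(agent, item)` pairs. -/
theorem exists_round {n : ℕ} {A : Finset (Fin n × Fin n × Fin n)} (hA : IsCompleteAlloc n A)
    (i j : Fin n) : ∃ k, (i, j, k) ∈ A := by
  obtain ⟨⟨h1, -, -⟩, hc⟩ := hA
  have himg : A.image (fun t => (t.1, t.2.1)) = Finset.univ := by
    rw [← Finset.card_eq_iff_eq_univ, Finset.card_image_of_injOn, hc]
    · simp [sq]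
    · rintro ⟨a, b, c⟩ h ⟨a', b', c'⟩ h' e
      simp only [Prod.mk.injEq] at e
      obtain ⟨rfl, rfl⟩ := e
      rw [h1 a b c c' h h']
  have hm : (i, j) ∈ A.image (fun t => (t.1, t.2.1)) := himg ▸ Finset.mem_univ _
  obtain ⟨⟨a, b, c⟩, h, e⟩ := Finset.mem_image.1 hm
  simp only [Prod.mk.injEq] at e
  obtain ⟨rfl, rfl⟩ := e
  exact ⟨c, h⟩

/-- The diagonal of a Latin square of order 2 is constant. -/
theorem diag_iff {A : Finset (Fin 2 × Fin 2 × Fin 2)} (hA : IsCompleteAlloc 2 A) :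
    ((1, 1, 1) : Fin 2 × Fin 2 × Fin 2) ∈ A ↔ ((0, 0, 0) : Fin 2 × Fin 2 × Fin 2) ∉ A := by
  obtain ⟨a, ha⟩ := exists_round hA 0 0
  obtain ⟨b, hb⟩ := exists_round hA 0 1
  obtain ⟨d, hd⟩ := exists_round hA 1 1
  obtain ⟨⟨h1, h2, h3⟩, -⟩ := hA
  have hab : a ≠ b := by
    rintro rfl
    exact absurd (h2 _ _ _ _ ha hb) (by decide)
  have hbd : b ≠ d := by
    rintro rfl
    exact absurd (h3 _ _ _ _ hb hd) (by decide)
  have e1 : (1, 1, 1) ∈ A ↔ d = 1 := ⟨fun h => h1 _ _ _ _ hd h, fun h => h ▸ hd⟩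
  have e0 : (0, 0, 0) ∈ A ↔ a = 0 := ⟨fun h => h1 _ _ _ _ ha h, fun h => h ▸ ha⟩
  rw [e1, e0]
  omega

/-- in the order-2 instance with `v_{1,1,1} = v_{2,2,2} = 1` and all
other valuations 0 (0-based: `v i j k = 1` iff `i = j = k`), some partial
allocation attains utilitarian welfare 2 and egalitarian welfare 1, while every
complete allocation has utilitarian welfare exactly 1 and egalitarian welfare
exactly 0. -/
theorem stmt_8 (v : Fin 2 → Fin 2 → Fin 2 → ℝ)
    (hv : ∀ i j k, v i j k = if i = j ∧ j = k then 1 else 0) :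
    (∃ A : Finset (Fin 2 × Fin 2 × Fin 2), IsPartialAlloc 2 A ∧
        usw v A = 2 ∧ egal2 v A = 1) ∧
    (∀ A : Finset (Fin 2 × Fin 2 × Fin 2), IsCompleteAlloc 2 A →
        usw v A = 1 ∧ egal2 v A = 0) := by
  refine ⟨⟨{(0, 0, 0), (1, 1, 1)}, ?_, ?_, ?_⟩, fun A hA => ?_⟩
  · simp [IsPartialAlloc, Fin.forall_fin_two]
  · rw [usw, Fin.sum_univ_two, agentVal_eq v hv, agentVal_eq v hv]
    norm_num
  · simp [egal2_eq, agentVal_eq v hv]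
  · have h := diag_iff hA
    by_cases h0 : ((0, 0, 0) : Fin 2 × Fin 2 × Fin 2) ∈ A <;>
      rw [usw, Fin.sum_univ_two] <;> simp [egal2_eq, agentVal_eq v hv, h, h0]
end

section
/- Let P be a partial Latin square of order n with rows M=[n], columns R=[n], and symbols N=[n]. Define binary valuations by v_{ijk} = 0 if P is defined at cell (j,k) and P(j,k) ≠ i, and v_{ijk} = 1 otherwise (i.e., if P(j,k) = i or P is undefined at (j,k)). Then P extends to a complete Latin square of order n if and only if there exists a complete allocation A of the resulting LSA instance with v_{ijk} = 1 for all (i,j,k) ∈ A. -/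
theorem IsCompleteAlloc.exists_agent {n : ℕ} {A : Finset (Fin n × Fin n × Fin n)}
    (hA : IsCompleteAlloc n A) (j k : Fin n) : ∃ i, (i, j, k) ∈ A := by
  obtain ⟨⟨-, -, h3⟩, hcard⟩ := hA
  have hinj : Set.InjOn (Prod.snd : Fin n × Fin n × Fin n → Fin n × Fin n) A := by
    rintro ⟨i, c⟩ hi ⟨i', c'⟩ hi' (rfl : c = c')
    rw [h3 i i' c.1 c.2 hi hi']
  have himg : A.image Prod.snd = Finset.univ := by
    rw [← Finset.card_eq_iff_eq_univ, Finset.card_image_of_injOn hinj, hcard]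
    simp [sq]
  have hjk : (j, k) ∈ A.image Prod.snd := himg ▸ Finset.mem_univ _
  obtain ⟨⟨i, c⟩, hi, rfl⟩ := Finset.mem_image.1 hjk
  exact ⟨i, hi⟩

/-- The valuation of a triple is `1` exactly when the triple does not contradict `P`. -/
theorem valuation_eq_one_iff {n : ℕ} (o : Option (Fin n)) (i : Fin n) :
    o.elim 1 (fun s => if s = i then 1 else 0) = 1 ↔ ∀ s, o = some s → s = i := by
  cases o <;> simp

/-- with binary valuations `v i j k = 0` if `P` is defined at
`(j,k)` with `P(j,k) ≠ i`, and `v i j k = 1` otherwise, the partial Latin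
square `P` extends to a complete Latin square iff there is a complete
allocation `A` with `v i j k = 1` for all `(i,j,k) ∈ A`. -/
theorem stmt_10 (n : ℕ) (P : Fin n → Fin n → Option (Fin n)) (hP : IsPLS n P)
    (v : Fin n → Fin n → Fin n → ℕ)
    (hv : ∀ i j k, v i j k = (P j k).elim 1 (fun s => if s = i then 1 else 0)) :
    (∃ Q : Fin n → Fin n → Option (Fin n),
        IsPLS n Q ∧ PLSExtends n P Q ∧ ∀ j k, (Q j k).isSome) ↔
    (∃ A : Finset (Fin n × Fin n × Fin n), IsCompleteAlloc n A ∧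
        ∀ t ∈ A, v t.1 t.2.1 t.2.2 = 1) := by
  simp only [hv, valuation_eq_one_iff]
  constructor
  · rintro ⟨Q, ⟨hrow, hcol⟩, hext, htot⟩
    choose q hq using fun j k => Option.isSome_iff_exists.1 (htot j k)
    have hmem : ∀ i j k, (i, j, k) ∈ Finset.univ.image
        (fun c : Fin n × Fin n => (q c.1 c.2, c)) ↔ q j k = i := by
      intro i j k
      simp
    refine ⟨Finset.univ.image fun c : Fin n × Fin n => (q c.1 c.2, c), ⟨⟨?_, ?_, ?_⟩, ?_⟩, ?_⟩
    · intro i j k k' h h'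
      rw [hmem] at h h'
      exact hrow j k k' i (h ▸ hq j k) (h' ▸ hq j k')
    · intro i j j' k h h'
      rw [hmem] at h h'
      exact hcol j j' k i (h ▸ hq j k) (h' ▸ hq j' k)
    · intro i i' j k h h'
      rw [hmem] at h h'
      exact h.symm.trans h'
    · rw [Finset.card_image_of_injective _ fun c c' h => congrArg Prod.snd h]
      simp [sq]
    · rintro ⟨i, j, k⟩ h s hs
      rw [hmem] at h
      exact (Option.some.inj ((hext j k s hs).symm.trans (hq j k))).trans h
  · rintro ⟨A, hA, hval⟩
    choose q hq using hA.exists_agent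
    obtain ⟨⟨h1, h2, -⟩, -⟩ := hA
    refine ⟨fun j k => some (q j k), ⟨?_, ?_⟩, ?_, fun _ _ => rfl⟩
    · intro j k k' s h h'
      obtain rfl := Option.some.inj h
      exact h1 _ j k k' (hq j k) (Option.some.inj h' ▸ hq j k')
    · intro j j' k s h h'
      obtain rfl := Option.some.inj h
      exact h2 _ j j' k (hq j k) (Option.some.inj h' ▸ hq j' k)
    · intro j k s hs
      exact congrArg some (hval _ (hq j k) s hs).symm
end

section
/- Let m ≥ 3 and let a_1, …, a_{3m}, T be positive integers with T/4 < a_j < T/2 for all j and ∑_{j=1}^{3m} a_j = mT. Define an LSA instance of order n = 6m with identical valuations: v_{ijk} = a_j if j = k ≤ 3m; otherwise v_{ijk} = T if j = 3m−1 and k ≤ 2m+1; otherwise v_{ijk} = T if j = 3m and k ≤ 3m−1; otherwise v_{ijk} = 0. Then there exists an envy-free (EF) complete allocation if and only if there exists a partition of [3m] into m triples S_1, …, S_m with ∑_{j∈S_i} a_j = T for each i ∈ [m]. -/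
/-- The bundle `A_i` of item–round pairs allocated to agent `i`. -/
def bundle {n : ℕ} (A : Finset (Fin n × Fin n × Fin n)) (i : Fin n) :
    Finset (Fin n × Fin n) :=
  (A.filter (fun t => t.1 = i)).image Prod.snd

/-- `v_i(S)`: agent `i`'s value for a set `S` of item–round pairs. -/
def val {n : ℕ} (v : Fin n → Fin n → Fin n → ℕ) (i : Fin n)
    (S : Finset (Fin n × Fin n)) : ℕ :=
  ∑ p ∈ S, v i p.1 p.2

/-- Envy-free. -/
def EF {n : ℕ} (v : Fin n → Fin n → Fin n → ℕ)
    (A : Finset (Fin n × Fin n × Fin n)) : Prop :=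
  ∀ i i', val v i (bundle A i') ≤ val v i (bundle A i)

/-! ### Ryser's extension of a half-size array to a Latin square -/

/-- In a bipartite graph in which every vertex of `X` has degree `d > 0` and every `y` has degree
at most `d`, some matching saturates `X` and also every `y` of degree exactly `d`. Vertices outside
`X` act as dummies sharing the degree deficits of the `y` equally; the resulting weights, divided
by `d`, form a doubly stochastic matrix, and by Birkhoff's theorem its support contains a
permutation. -/
lemma exists_perm_matching {ι : Type*} [Fintype ι] [DecidableEq ι] (X : Finset ι)
    (N : ι → Finset ι) (d : ℕ) (hd : 0 < d) (hrow : ∀ x ∈ X, (N x).card = d)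
    (hcol : ∀ y, (X.filter (fun x => y ∈ N x)).card ≤ d) :
    ∃ σ : Equiv.Perm ι, (∀ x ∈ X, σ x ∈ N x) ∧
      ∀ y, (X.filter (fun x => y ∈ N x)).card = d → σ.symm y ∈ X := by
  classical
  set deg : ι → ℕ := fun y => (X.filter (fun x => y ∈ N x)).card with hdeg
  have hdR : (0 : ℝ) < d := by exact_mod_cast hd
  have hcolR : ∀ y, (deg y : ℝ) ≤ d := fun y => by exact_mod_cast hcol y
  have hdegR : ∀ y, (deg y : ℝ) = ∑ x ∈ X, if y ∈ N x then (1 : ℝ) else 0 := by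
    intro y; simp [hdeg]
  have hrowR : ∀ x ∈ X, ∑ y, (if y ∈ N x then (1 : ℝ) else 0) = d := by
    intro x hx; simp [hrow x hx]
  have htot : ∑ y, (deg y : ℝ) = X.card * d := by
    simp_rw [hdegR]
    rw [Finset.sum_comm, Finset.sum_congr rfl hrowR]
    simp
  set q : ℝ := (Xᶜ.card : ℝ) with hq
  have hcard : q + X.card = Fintype.card ι := by
    rw [hq]; exact_mod_cast Finset.card_compl_add_card X
  have hdef : ∑ y, (1 - (deg y : ℝ) / d) = q := by
    rw [Finset.sum_sub_distrib, ← Finset.sum_div, htot]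
    simp only [Finset.sum_const, Finset.card_univ, nsmul_eq_mul, mul_one]
    rw [mul_div_assoc, div_self hdR.ne']
    linarith
  have hnn : ∀ y, 0 ≤ 1 - (deg y : ℝ) / d := by
    intro y
    have := (div_le_one hdR).2 (hcolR y)
    linarith
  set M : Matrix ι ι ℝ := fun x y =>
    if x ∈ X then (if y ∈ N x then 1 else 0) / d else (1 - (deg y : ℝ) / d) / q with hM
  have hMmem : M ∈ doublyStochastic ℝ ι := by
    rw [mem_doublyStochastic_iff_sum]
    refine ⟨fun x y => ?_, fun x => ?_, fun y => ?_⟩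
    · simp only [hM]
      split_ifs
      · positivity
      · positivity
      · exact div_nonneg (hnn y) (by positivity)
    · by_cases hx : x ∈ X
      · simp only [hM, hx, if_true]
        rw [← Finset.sum_div, hrowR x hx, div_self hdR.ne']
      · simp only [hM, hx, if_false]
        rw [← Finset.sum_div, hdef, div_self]
        have : 0 < Xᶜ.card := Finset.card_pos.2 ⟨x, by simpa using hx⟩
        rw [hq]; positivity
    · rw [← Finset.sum_add_sum_compl X]
      have h1 : ∑ x ∈ X, M x y = deg y / d := by
        rw [hdegR, Finset.sum_div]
        exact Finset.sum_congr rfl fun x hx => by simp [hM, hx]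
      have h2 : ∑ x ∈ Xᶜ, M x y = q * ((1 - (deg y : ℝ) / d) / q) := by
        rw [Finset.sum_congr rfl (g := fun _ => (1 - (deg y : ℝ) / d) / q)]
        · simp [hq]
        · intro x hx
          have hx' : x ∉ X := by simpa using hx
          simp [hM, hx']
      rw [h1, h2]
      by_cases h0 : q = 0
      · have : 1 - (deg y : ℝ) / d = 0 :=
          (Finset.sum_eq_zero_iff_of_nonneg fun y _ => hnn y).1 (hdef.trans h0) y
            (Finset.mem_univ y)
        rw [this, zero_div, mul_zero]; linarith
      · rw [mul_div_cancel₀ _ h0]; ring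
  obtain ⟨w, hw0, hw1, hwM⟩ := exists_eq_sum_perm_of_mem_doublyStochastic hMmem
  obtain ⟨σ, hσ⟩ : ∃ σ, 0 < w σ := by
    by_contra! h
    have : ∑ σ, w σ ≤ 0 := Finset.sum_nonpos fun σ _ => h σ
    linarith
  -- `σ` has positive weight in the decomposition of `M`, so it lives on the support of `M`.
  have hpos : ∀ x, 0 < M x (σ x) := by
    intro x
    rw [← hwM, Matrix.sum_apply]
    refine lt_of_lt_of_le ?_ (Finset.single_le_sum
      (f := fun τ => (w τ • Equiv.Perm.permMatrix ℝ τ) x (σ x)) ?_ (Finset.mem_univ σ))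
    · simpa [Equiv.Perm.permMatrix, PEquiv.toMatrix_apply] using hσ
    · intro τ _
      simp only [Equiv.Perm.permMatrix, Matrix.smul_apply, PEquiv.toMatrix_apply, smul_eq_mul]
      have := hw0 τ
      positivity
  refine ⟨σ, fun x hx => ?_, fun y hy => ?_⟩
  · by_contra hn
    have := hpos x
    simp [hM, hx, hn] at this
  · by_contra hn
    have h := hpos (σ.symm y)
    have hy' : deg y = d := hy
    simp [hM, hn, hy', div_self hdR.ne'] at h

/-- König's edge colouring in the form needed here: if every `x ∈ X` has exactly `#C` neighbours
and no `y` has more than `#C`, the edges split into matchings `G c`, `c ∈ C`, each saturating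
`X`. -/
lemma exists_matching_decomposition {ι κ : Type*} [Fintype ι] [DecidableEq ι] [DecidableEq κ]
    (X : Finset ι) (C : Finset κ) :
    ∀ N : ι → Finset ι, (∀ x ∈ X, (N x).card = C.card) →
      (∀ y, (X.filter (fun x => y ∈ N x)).card ≤ C.card) →
      ∃ G : κ → ι → ι, (∀ c ∈ C, Function.Injective (G c)) ∧
        (∀ c ∈ C, ∀ x ∈ X, G c x ∈ N x) ∧
        ∀ x ∈ X, ∀ c ∈ C, ∀ c' ∈ C, G c x = G c' x → c = c' := by
  induction C using Finset.induction_on with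
  | empty => intro N _ _; exact ⟨fun _ => id, by simp, by simp, by simp⟩
  | insert c₀ C hc₀ ih =>
    intro N hrow hcol
    rw [Finset.card_insert_of_notMem hc₀] at hrow hcol
    obtain ⟨σ, hσ, hσ'⟩ := exists_perm_matching X N _ (Nat.succ_pos _) hrow hcol
    -- Deleting `σ` lowers every degree equal to the maximum, so the bound `#C` holds afterwards.
    obtain ⟨G, hG1, hG2, hG3⟩ := ih (fun x => (N x).erase (σ x))
      (fun x hx => by rw [Finset.card_erase_of_mem (hσ x hx), hrow x hx]; rfl)
      (fun y => by
        have hsub : X.filter (fun x => y ∈ (N x).erase (σ x)) ⊆ X.filter (fun x => y ∈ N x) :=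
          fun x hx => by
            simp only [Finset.mem_filter, Finset.mem_erase] at hx ⊢
            exact ⟨hx.1, hx.2.2⟩
        rcases Nat.lt_or_ge (X.filter (fun x => y ∈ N x)).card (C.card + 1) with h | h
        · have := Finset.card_le_card hsub
          omega
        · have heq := le_antisymm (hcol y) h
          have hx := hσ' y heq
          have : X.filter (fun x => y ∈ (N x).erase (σ x)) ⊂ X.filter (fun x => y ∈ N x) := by
            refine Finset.ssubset_iff_of_subset hsub |>.2 ⟨σ.symm y, ?_, ?_⟩
            · simpa [hx] using hσ _ hx
            · simp
          have := Finset.card_lt_card this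
          omega)
    have hne : ∀ c ∈ C, c ≠ c₀ := fun c hc h => hc₀ (h ▸ hc)
    refine ⟨Function.update G c₀ σ, ?_, ?_, ?_⟩
    · intro c hc
      rcases Finset.mem_insert.1 hc with rfl | hc
      · simpa using σ.injective
      · simpa [hne c hc] using hG1 c hc
    · intro c hc x hx
      rcases Finset.mem_insert.1 hc with rfl | hc
      · simpa using hσ x hx
      · simpa [hne c hc] using Finset.mem_of_mem_erase (hG2 c hc x hx)
    · intro x hx c hc c' hc' h
      rcases Finset.mem_insert.1 hc with e | hcC <;>
        rcases Finset.mem_insert.1 hc' with e' | hcC'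
      · rw [e, e']
      · have := Finset.ne_of_mem_erase (hG2 c' hcC' x hx)
        simp only [e, Function.update_self, Function.update_of_ne (hne c' hcC')] at h
        exact absurd h.symm this
      · have := Finset.ne_of_mem_erase (hG2 c hcC x hx)
        simp only [e', Function.update_self, Function.update_of_ne (hne c hcC)] at h
        exact absurd h this
      · simp only [Function.update_of_ne (hne c hcC), Function.update_of_ne (hne c' hcC')] at h
        exact hG3 x hx c hcC c' hcC' h

/-- Ryser's theorem for `2r` symbols: a Latin `r × r` array, occupying the rows and columns in `H`,
extends to a Latin square of order `2r = #ι`. -/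
lemma exists_latin_extension {ι : Type*} [Fintype ι] [DecidableEq ι] (H : Finset ι)
    (hH : Hᶜ.card = H.card) (A : ι → ι → ι)
    (hr : ∀ x ∈ H, ∀ y ∈ H, ∀ y' ∈ H, A x y = A x y' → y = y')
    (hc : ∀ y ∈ H, ∀ x ∈ H, ∀ x' ∈ H, A x y = A x' y → x = x') :
    ∃ L : ι → ι → ι, (∀ x y y', L x y = L x y' → y = y') ∧
      (∀ y x x', L x y = L x' y → x = x') ∧ ∀ x ∈ H, ∀ y ∈ H, L x y = A x y := by
  -- The new columns: row `x` must receive in them exactly the symbols missing from `A x`.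
  obtain ⟨G, hG1, hG2, hG3⟩ := exists_matching_decomposition H Hᶜ
    (fun x => (H.image (A x))ᶜ)
    (fun x hx => by
      rw [Finset.card_compl, Finset.card_image_of_injOn
        (fun y hy y' hy' h => hr x hx y hy y' hy' h), ← Finset.card_compl])
    (fun y => (Finset.card_filter_le _ _).trans hH.ge)
  set B : ι → ι → ι := fun x y => if y ∈ H then A x y else G y x with hB
  have hBr : ∀ x ∈ H, Function.Injective (B x) := by
    intro x hx y y' h
    by_cases hy : y ∈ H <;> by_cases hy' : y' ∈ H <;> simp only [hB, hy, hy', if_true, if_false] at h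
    · exact hr x hx y hy y' hy' h
    · have := hG2 y' (by simpa using hy') x hx
      rw [← h] at this
      exact absurd (Finset.mem_image_of_mem _ hy) (Finset.mem_compl.1 this)
    · have := hG2 y (by simpa using hy) x hx
      rw [h] at this
      exact absurd (Finset.mem_image_of_mem _ hy') (Finset.mem_compl.1 this)
    · exact hG3 x hx y (by simpa using hy) y' (by simpa using hy') h
  have hBc : ∀ y, ∀ x ∈ H, ∀ x' ∈ H, B x y = B x' y → x = x' := by
    intro y x hx x' hx' h
    by_cases hy : y ∈ H <;> simp only [hB, hy, if_true, if_false] at h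
    · exact hc y hy x hx x' hx' h
    · exact hG1 y (by simpa using hy) h
  -- The new rows: column `y` must receive in them exactly the symbols missing from it so far.
  obtain ⟨K, hK1, hK2, hK3⟩ := exists_matching_decomposition Finset.univ Hᶜ
    (fun y => (H.image (fun x => B x y))ᶜ)
    (fun y _ => by
      rw [Finset.card_compl, Finset.card_image_of_injOn
        (fun x hx x' hx' h => hBc y x hx x' hx' h), ← Finset.card_compl])
    (fun s => by
      have hbij : ∀ x ∈ H, ∃ y, B x y = s := fun x hx =>
        (Finite.injective_iff_surjective.1 (hBr x hx)) s
      choose! p hp using hbij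
      have hinj : Set.InjOn p H := fun x hx x' hx' h =>
        hBc (p x) x hx x' hx' ((hp x hx).trans (by rw [h]; exact (hp x' hx').symm))
      have hsub : Finset.univ.filter (fun y => s ∈ (H.image (fun x => B x y))ᶜ)
          ⊆ (H.image p)ᶜ := by
        intro y hy
        simp only [Finset.mem_filter, Finset.mem_compl, Finset.mem_image, not_exists,
          not_and] at hy ⊢
        intro x hx h
        exact hy.2 x hx (h ▸ hp x hx)
      refine (Finset.card_le_card hsub).trans ?_
      rw [Finset.card_compl, Finset.card_image_of_injOn hinj, ← Finset.card_compl])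
  refine ⟨fun x y => if x ∈ H then B x y else K x y, ?_, ?_, ?_⟩
  · intro x y y' h
    by_cases hx : x ∈ H <;> simp only [hx, if_true, if_false] at h
    · exact hBr x hx h
    · exact hK1 x (by simpa using hx) h
  · intro y x x' h
    by_cases hx : x ∈ H <;> by_cases hx' : x' ∈ H <;> simp only [hx, hx', if_true, if_false] at h
    · exact hBc y x hx x' hx' h
    · have := hK2 x' (by simpa using hx') y (Finset.mem_univ _)
      rw [← h] at this
      exact absurd (Finset.mem_image_of_mem (fun x => B x y) hx) (Finset.mem_compl.1 this)
    · have := hK2 x (by simpa using hx) y (Finset.mem_univ _)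
      rw [h] at this
      exact absurd (Finset.mem_image_of_mem (fun x => B x y) hx') (Finset.mem_compl.1 this)
    · exact hK3 y (Finset.mem_univ _) x (by simpa using hx) x' (by simpa using hx') h
  · intro x hx y hy
    simp [hB, hx, hy]

/-! ### Greedy filling of a partial array -/

/-- The partial array `A`, read only on the cells in `S`, never repeats a symbol within a row or a
column. -/
def ProperOn {ι : Type*} (S : Finset (ι × ι)) (A : ι × ι → ι) : Prop :=
  ∀ p ∈ S, ∀ q ∈ S, (p.1 = q.1 ∨ p.2 = q.2) → A p = A q → p = q

/-- Evans' observation: with `2r` symbols a partial Latin array inside an `r × r` square can be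
filled one cell at a time, since a cell sees only `2r - 2` other cells of the square. -/
lemma exists_greedy_fill {ι : Type*} [Fintype ι] [DecidableEq ι] (H : Finset ι)
    (hH : 2 * H.card = Fintype.card ι) (S : Finset (ι × ι)) (hS : S ⊆ H ×ˢ H)
    (A : ι × ι → ι) (hA : ProperOn S A) :
    ∃ B : ι × ι → ι, ProperOn (H ×ˢ H) B ∧ ∀ p ∈ S, B p = A p := by
  suffices h : ∀ U : Finset (ι × ι), U ⊆ H ×ˢ H →
      ∃ B : ι × ι → ι, ProperOn (S ∪ U) B ∧ ∀ p ∈ S, B p = A p by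
    obtain ⟨B, h1, h2⟩ := h (H ×ˢ H) subset_rfl
    rw [Finset.union_eq_right.2 hS] at h1
    exact ⟨B, h1, h2⟩
  intro U
  induction U using Finset.induction_on with
  | empty => intro _; exact ⟨A, by simpa using hA, fun _ _ => rfl⟩
  | insert c U hcU ih =>
    intro hU
    obtain ⟨B, h1, h2⟩ := ih ((Finset.subset_insert _ _).trans hU)
    by_cases hcS : c ∈ S
    · refine ⟨B, ?_, h2⟩
      rwa [Finset.union_insert, Finset.insert_eq_of_mem (Finset.mem_union_left _ hcS)]
    have hc : c ∈ H ×ˢ H := hU (Finset.mem_insert_self _ _)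
    obtain ⟨hc1, hc2⟩ := Finset.mem_product.1 hc
    -- The symbols in the row and the column of `c` number at most `2 * (#H - 1) < #ι`.
    obtain ⟨s, hs⟩ : ∃ s, s ∉ ((H.erase c.2).image (fun y => B (c.1, y))) ∪
        ((H.erase c.1).image (fun x => B (x, c.2))) := by
      by_contra! hall
      have hle := Finset.card_le_card (fun s (_ : s ∈ Finset.univ) => hall s)
      have h3 := Finset.card_union_le ((H.erase c.2).image (fun y => B (c.1, y)))
        ((H.erase c.1).image (fun x => B (x, c.2)))
      have h4 := Finset.card_image_le (s := H.erase c.2) (f := fun y => B (c.1, y))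
      have h5 := Finset.card_image_le (s := H.erase c.1) (f := fun x => B (x, c.2))
      rw [Finset.card_erase_of_mem hc2] at h4
      rw [Finset.card_erase_of_mem hc1] at h5
      rw [Finset.card_univ] at hle
      have := Finset.card_pos.2 ⟨_, hc1⟩
      omega
    have key : ∀ q ∈ S ∪ U, q ≠ c → (c.1 = q.1 ∨ c.2 = q.2) → B q ≠ s := by
      rintro ⟨x, y⟩ hq hqc hor rfl
      have hq' : (x, y) ∈ H ×ˢ H := by
        rcases Finset.mem_union.1 hq with h | h
        · exact hS h
        · exact hU (Finset.mem_insert_of_mem h)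
      obtain ⟨hx, hy⟩ := Finset.mem_product.1 hq'
      apply hs
      rw [Finset.mem_union, Finset.mem_image, Finset.mem_image]
      simp only at hor hx hy
      rcases hor with h | h
      · left
        exact ⟨y, Finset.mem_erase.2 ⟨fun e => hqc (by rw [← h, e]), hy⟩, by rw [h]⟩
      · right
        exact ⟨x, Finset.mem_erase.2 ⟨fun e => hqc (by rw [← h, e]), hx⟩, by rw [h]⟩
    refine ⟨Function.update B c s, ?_, ?_⟩
    · intro p hp q hq hor h
      rw [Finset.union_insert, Finset.mem_insert] at hp hq
      by_cases hpc : p = c <;> by_cases hqc : q = c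
      · rw [hpc, hqc]
      · subst hpc
        rw [Function.update_self, Function.update_of_ne hqc] at h
        exact absurd h.symm (key q (hq.resolve_left hqc) hqc hor)
      · subst hqc
        rw [Function.update_self, Function.update_of_ne hpc] at h
        exact absurd h (key p (hp.resolve_left hpc) hpc (hor.imp Eq.symm Eq.symm))
      · rw [Function.update_of_ne hqc, Function.update_of_ne hpc] at h
        exact h1 p (hp.resolve_left hpc) q (hq.resolve_left hqc) hor h
    · intro p hp
      have : p ≠ c := fun e => hcS (e ▸ hp)
      rw [Function.update_of_ne this, h2 p hp]

/-! ### Complete allocations as Latin squares -/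

/-- `L j k` is the agent receiving item `j` in round `k`. -/
lemma val_bundle_eq {n : ℕ} (A : Finset (Fin n × Fin n × Fin n)) (L : Fin n → Fin n → Fin n)
    (hL : ∀ i j k, (i, j, k) ∈ A ↔ L j k = i) (v : Fin n → Fin n → Fin n → ℕ) (i i' : Fin n) :
    val v i (bundle A i') = ∑ j, ∑ k, if L j k = i' then v i j k else 0 := by
  have hb : bundle A i' = Finset.univ.filter (fun p : Fin n × Fin n => L p.1 p.2 = i') := by
    ext ⟨j, k⟩
    simp only [bundle, Finset.mem_image, Finset.mem_filter, Finset.mem_univ, true_and]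
    constructor
    · rintro ⟨⟨i₁, j₁, k₁⟩, ⟨h1, h2⟩, h3⟩
      obtain ⟨rfl, rfl⟩ := Prod.mk.inj h3
      exact ((hL _ _ _).1 h1).trans h2
    · intro h
      exact ⟨(i', j, k), ⟨(hL _ _ _).2 h, rfl⟩, rfl⟩
  rw [hb, val, Finset.sum_filter, Fintype.sum_prod_type]

lemma exists_array_of_complete {n : ℕ} (A : Finset (Fin n × Fin n × Fin n))
    (hA : IsCompleteAlloc n A) :
    ∃ L : Fin n → Fin n → Fin n, ∀ i j k, (i, j, k) ∈ A ↔ L j k = i := by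
  obtain ⟨⟨-, -, h3⟩, hcard⟩ := hA
  have himg : A.image Prod.snd = Finset.univ := by
    apply Finset.eq_univ_of_card
    rw [Finset.card_image_of_injOn, hcard]
    · simp [sq]
    · rintro ⟨i, j, k⟩ h ⟨i', j', k'⟩ h' e
      obtain ⟨rfl, rfl⟩ := Prod.mk.inj e
      rw [h3 _ _ _ _ h h']
  have hex : ∀ j k, ∃ i, (i, j, k) ∈ A := by
    intro j k
    have : (j, k) ∈ A.image Prod.snd := himg ▸ Finset.mem_univ _
    obtain ⟨⟨i, _, _⟩, h, e⟩ := Finset.mem_image.1 this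
    obtain ⟨rfl, rfl⟩ := Prod.mk.inj e
    exact ⟨i, h⟩
  choose L hL using hex
  exact ⟨L, fun i j k => ⟨fun h => h3 _ _ _ _ (hL j k) h, fun h => h ▸ hL j k⟩⟩

lemma exists_complete_of_array {n : ℕ} (L : Fin n → Fin n → Fin n)
    (h1 : ∀ x y y', L x y = L x y' → y = y') (h2 : ∀ y x x', L x y = L x' y → x = x') :
    ∃ A, IsCompleteAlloc n A ∧ ∀ i j k, (i, j, k) ∈ A ↔ L j k = i := by
  set A : Finset (Fin n × Fin n × Fin n) :=
    Finset.univ.image (fun p : Fin n × Fin n => (L p.1 p.2, p.1, p.2)) with hA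
  have hmem : ∀ i j k, (i, j, k) ∈ A ↔ L j k = i := by
    intro i j k
    simp only [hA, Finset.mem_image, Finset.mem_univ, true_and, Prod.exists, Prod.mk.injEq]
    constructor
    · rintro ⟨_, _, h, rfl, rfl⟩; exact h
    · intro h; exact ⟨j, k, h, rfl, rfl⟩
  refine ⟨A, ⟨⟨?_, ?_, ?_⟩, ?_⟩, hmem⟩
  · intro i j k k' h h'
    rw [hmem] at h h'
    exact h1 j k k' (h.trans h'.symm)
  · intro i j j' k h h'
    rw [hmem] at h h'
    exact h2 k j j' (h.trans h'.symm)
  · intro i i' j k h h'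
    rw [hmem] at h h'
    exact h.symm.trans h'
  · rw [hA, Finset.card_image_of_injective]
    · simp [sq]
    · rintro ⟨j, k⟩ ⟨j', k'⟩ h
      simpa using (Prod.mk.inj h).2

/-! ### Values in the reduction instance -/

/-- The value of the cells satisfying `P`, split into the diagonal cells and the cells of value `T`
in the two special items `r` and `s`. The three groups are disjoint because `m ≥ 3` gives
`2m + 1 ≤ 3m - 2`. -/
lemma sum_split (m T : ℕ) (hm : 3 ≤ m) (a : ℕ → ℕ)
    (w : Fin (6 * m) → Fin (6 * m) → ℕ)
    (hw : ∀ j k, w j k =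
      if (j : ℕ) = (k : ℕ) ∧ (j : ℕ) < 3 * m then a (j : ℕ)
      else if (j : ℕ) = 3 * m - 2 ∧ (k : ℕ) < 2 * m + 1 then T
      else if (j : ℕ) = 3 * m - 1 ∧ (k : ℕ) < 3 * m - 1 then T
      else 0)
    (r s : Fin (6 * m)) (hr : (r : ℕ) = 3 * m - 2) (hs : (s : ℕ) = 3 * m - 1)
    (P : Fin (6 * m) → Fin (6 * m) → Prop) [∀ j k, Decidable (P j k)] :
    ∑ j, ∑ k, (if P j k then w j k else 0) =
      (∑ j : Fin (6 * m), if (j : ℕ) < 3 * m ∧ P j j then a j else 0) +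
      ((∑ k : Fin (6 * m), if (k : ℕ) < 2 * m + 1 ∧ P r k then 1 else 0) +
        ∑ k : Fin (6 * m), if (k : ℕ) < 3 * m - 1 ∧ P s k then 1 else 0) * T := by
  have hpt : ∀ j k, (if P j k then w j k else 0) =
      (if j = k then (if (j : ℕ) < 3 * m ∧ P j j then a j else 0) else 0) +
      (if j = r then (if (k : ℕ) < 2 * m + 1 ∧ P r k then T else 0) else 0) +
      (if j = s then (if (k : ℕ) < 3 * m - 1 ∧ P s k then T else 0) else 0) := by
    intro j k
    have e1 : j = k ↔ (j : ℕ) = k := Fin.ext_iff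
    have e2 : j = r ↔ (j : ℕ) = 3 * m - 2 := by rw [Fin.ext_iff, hr]
    have e3 : j = s ↔ (j : ℕ) = 3 * m - 1 := by rw [Fin.ext_iff, hs]
    rw [hw]
    by_cases hjk : j = k
    · subst hjk
      by_cases hjr : j = r
      · have : j ≠ s := fun h => by have := e3.1 h; have := e2.1 hjr; omega
        have h1 := e2.1 hjr
        subst hjr
        by_cases hP : P j j <;> simp [hP, this] <;> split_ifs <;> omega
      · by_cases hjs : j = s
        · have h1 := e3.1 hjs
          subst hjs
          by_cases hP : P j j <;> simp [hP, hjr] <;> split_ifs <;> omega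
        · have h2 := mt e2.2 hjr
          have h3 := mt e3.2 hjs
          by_cases hP : P j j <;> simp [hP, hjr, hjs, h2, h3]
    · have h1 := mt e1.2 hjk
      by_cases hjr : j = r
      · have : j ≠ s := fun h => by have := e3.1 h; have := e2.1 hjr; omega
        have h2 := e2.1 hjr
        subst hjr
        have h3 := mt e3.2 this
        by_cases hP : P j k
        · simp only [hP, this, hjk, if_true, if_false, and_true]; split_ifs <;> omega
        · simp [hP, this, hjk]
      · have h2 := mt e2.2 hjr
        by_cases hjs : j = s
        · have h3 := e3.1 hjs
          subst hjs
          by_cases hP : P j k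
          · simp only [hP, hjk, hjr, if_true, if_false, and_true]; split_ifs <;> omega
          · simp [hP, hjr, hjk]
        · have h3 := mt e3.2 hjs
          simp [hjk, hjr, hjs, h1, h2, h3]
  simp_rw [hpt, Finset.sum_add_distrib]
  have hsq : ∀ (t : Fin (6 * m)) (g : Fin (6 * m) → ℕ),
      ∑ j, ∑ k, (if j = t then g k else 0) = ∑ k, g k := by
    intro t g
    rw [Finset.sum_comm]
    simp
  rw [hsq r, hsq s, add_mul, Finset.sum_mul, Finset.sum_mul]
  simp [add_assoc, ite_mul]

lemma sum_fin_lt {N M : ℕ} (h : M ≤ N) (g : ℕ → ℕ) :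
    (∑ j : Fin N, if (j : ℕ) < M then g j else 0) = ∑ j ∈ Finset.range M, g j := by
  rw [Fin.sum_univ_eq_sum_range (fun j => if j < M then g j else 0) N, ← Finset.sum_filter]
  congr 1
  ext j
  simp only [Finset.mem_filter, Finset.mem_range]
  omega

lemma sum_fin_castLE {N M : ℕ} (h : M ≤ N) (g : Fin N → ℕ) :
    (∑ j : Fin N, if (j : ℕ) < M then g j else 0) = ∑ j : Fin M, g (Fin.castLE h j) := by
  have h1 := sum_fin_lt h (fun j => if h : j < N then g ⟨j, h⟩ else 0)
  simp only [Fin.is_lt, dif_pos, Fin.eta] at h1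
  rw [h1, ← Fin.sum_univ_eq_sum_range (fun j => if h : j < N then g ⟨j, h⟩ else 0) M]
  refine Finset.sum_congr rfl fun j _ => ?_
  have : (j : ℕ) < N := j.2.trans_le h
  simp only [this, dif_pos]
  rfl

/-- The bundles are worth `6m · T` altogether, that is `T` per agent on average. -/
lemma total_value (m T : ℕ) (hm : 3 ≤ m) (a : ℕ → ℕ)
    (hsum : ∑ j ∈ Finset.range (3 * m), a j = m * T)
    (w : Fin (6 * m) → Fin (6 * m) → ℕ)
    (hw : ∀ j k, w j k =
      if (j : ℕ) = (k : ℕ) ∧ (j : ℕ) < 3 * m then a (j : ℕ)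
      else if (j : ℕ) = 3 * m - 2 ∧ (k : ℕ) < 2 * m + 1 then T
      else if (j : ℕ) = 3 * m - 1 ∧ (k : ℕ) < 3 * m - 1 then T
      else 0) (L : Fin (6 * m) → Fin (6 * m) → Fin (6 * m)) :
    ∑ i, ∑ j, ∑ k, (if L j k = i then w j k else 0) = 6 * m * T := by
  have h1 : ∑ i, ∑ j, ∑ k, (if L j k = i then w j k else 0) =
      ∑ j, ∑ k, if True then w j k else 0 := by
    rw [Finset.sum_comm]
    refine Finset.sum_congr rfl fun j _ => ?_
    rw [Finset.sum_comm]
    simp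
  rw [h1, sum_split m T hm a w hw ⟨3 * m - 2, by omega⟩ ⟨3 * m - 1, by omega⟩ rfl rfl
    (fun _ _ => True)]
  simp only [and_true]
  rw [sum_fin_lt (by omega) a, sum_fin_lt (by omega) (fun _ => 1), sum_fin_lt (by omega) (fun _ => 1),
    hsum]
  simp only [Finset.sum_const, Finset.card_range, smul_eq_mul, mul_one]
  rw [← add_mul]
  congr 1
  omega

/-! ### The two implications -/

/-- Envy-freeness with identical values gives every agent exactly `T`; the agents without a cell of
value `T` index the classes of the partition. -/
theorem exists_partition_of_envyFree (m T : ℕ) (hm : 3 ≤ m) (hT : 0 < T) (a : ℕ → ℕ)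
    (ha_pos : ∀ j, j < 3 * m → 0 < a j)
    (ha : ∀ j, j < 3 * m → T < 4 * a j ∧ 2 * a j < T)
    (hsum : ∑ j ∈ Finset.range (3 * m), a j = m * T)
    (w : Fin (6 * m) → Fin (6 * m) → ℕ)
    (hw : ∀ j k, w j k =
      if (j : ℕ) = (k : ℕ) ∧ (j : ℕ) < 3 * m then a (j : ℕ)
      else if (j : ℕ) = 3 * m - 2 ∧ (k : ℕ) < 2 * m + 1 then T
      else if (j : ℕ) = 3 * m - 1 ∧ (k : ℕ) < 3 * m - 1 then T
      else 0) (L : Fin (6 * m) → Fin (6 * m) → Fin (6 * m))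
    (hEF : ∀ i i', ∑ j, ∑ k, (if L j k = i' then w j k else 0) ≤
      ∑ j, ∑ k, (if L j k = i then w j k else 0)) :
    ∃ f : Fin (3 * m) → Fin m, ∀ i : Fin m,
        (Finset.univ.filter (fun j => f j = i)).card = 3 ∧
        ∑ j ∈ Finset.univ.filter (fun j => f j = i), a (j : ℕ) = T := by
  have hV : ∀ i, ∑ j, ∑ k, (if L j k = i then w j k else 0) = T := by
    intro i
    have h1 := total_value m T hm a hsum w hw L
    rw [Finset.sum_congr rfl (fun i' _ => le_antisymm (hEF i i') (hEF i' i))] at h1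
    simp only [Finset.sum_const, Finset.card_univ, Fintype.card_fin, smul_eq_mul] at h1
    exact Nat.eq_of_mul_eq_mul_left (by omega) h1
  set r : Fin (6 * m) := ⟨3 * m - 2, by omega⟩
  set s : Fin (6 * m) := ⟨3 * m - 1, by omega⟩
  -- `D i` is the diagonal value received by agent `i`, and `c i` the number of `T`-cells.
  set D : Fin (6 * m) → ℕ := fun i => ∑ j : Fin (6 * m), if (j : ℕ) < 3 * m ∧ L j j = i then a j else 0
    with hD
  set c : Fin (6 * m) → ℕ := fun i =>
    (∑ k : Fin (6 * m), if (k : ℕ) < 2 * m + 1 ∧ L r k = i then 1 else 0) +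
        ∑ k : Fin (6 * m), if (k : ℕ) < 3 * m - 1 ∧ L s k = i then 1 else 0 with hc
  have hDc : ∀ i, D i + c i * T = T := fun i => by
    rw [← sum_split m T hm a w hw r s rfl rfl (fun j k => L j k = i), hV i]
  have hc1 : ∀ i, c i ≤ 1 := by
    intro i
    by_contra! h
    have := Nat.mul_le_mul_right T h
    have := hDc i
    omega
  have hcsum : ∑ i, c i = 5 * m := by
    have hone : ∀ (M : ℕ) (t : Fin (6 * m)), M ≤ 6 * m →
        ∑ i, ∑ k : Fin (6 * m), (if (k : ℕ) < M ∧ L t k = i then 1 else 0) = M := by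
      intro M t hM
      rw [Finset.sum_comm]
      have : ∀ k : Fin (6 * m), ∑ i, (if (k : ℕ) < M ∧ L t k = i then 1 else 0) =
          if (k : ℕ) < M then 1 else 0 := by
        intro k
        by_cases h : (k : ℕ) < M <;> simp [h]
      rw [Finset.sum_congr rfl fun k _ => this k, sum_fin_lt hM (fun _ => 1)]
      simp
    rw [hc, Finset.sum_add_distrib, hone _ r (by omega), hone _ s (by omega)]
    omega
  -- The `5m` cells of value `T` go to distinct agents, so exactly `m` agents get none of them.
  have hcard : Fintype.card {i // c i = 0} = m := by
    rw [Fintype.card_subtype]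
    have h1 := Finset.card_filter_add_card_filter_not (s := (Finset.univ : Finset (Fin (6 * m))))
      (fun i => c i = 0)
    have h2 : ∑ i, c i = (Finset.univ.filter (fun i => ¬ c i = 0)).card := by
      rw [Finset.card_filter]
      refine Finset.sum_congr rfl fun i _ => ?_
      have := hc1 i
      split_ifs <;> omega
    rw [Finset.card_univ, Fintype.card_fin] at h1
    omega
  -- A diagonal item has positive value, which leaves no room for a cell of value `T`.
  have hdiag : ∀ j : Fin (6 * m), (j : ℕ) < 3 * m → c (L j j) = 0 := by
    intro j hj
    have h1 : a j ≤ D (L j j) := by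
      have := Finset.single_le_sum
        (f := fun j' : Fin (6 * m) => if (j' : ℕ) < 3 * m ∧ L j' j' = L j j then a j' else 0)
        (fun _ _ => Nat.zero_le _) (Finset.mem_univ j)
      simpa [hj] using this
    have h2 := ha_pos j hj
    have h3 := hDc (L j j)
    by_contra h
    have := Nat.mul_le_mul_right T (Nat.one_le_iff_ne_zero.2 h)
    omega
  set e := Fintype.equivFinOfCardEq hcard
  have hle : 3 * m ≤ 6 * m := by omega
  refine ⟨fun j => e ⟨L (Fin.castLE hle j) (Fin.castLE hle j), hdiag _ j.2⟩, fun i => ?_⟩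
  have hiff : ∀ j : Fin (3 * m), e ⟨L (Fin.castLE hle j) (Fin.castLE hle j), hdiag _ j.2⟩ = i ↔
      L (Fin.castLE hle j) (Fin.castLE hle j) = (e.symm i).1 := by
    intro j
    rw [← Equiv.eq_symm_apply, Subtype.ext_iff]
  have hsumT : ∑ j ∈ Finset.univ.filter (fun j : Fin (3 * m) =>
      e ⟨L (Fin.castLE hle j) (Fin.castLE hle j), hdiag _ j.2⟩ = i), a (j : ℕ) = T := by
    have h1 := hDc (e.symm i).1
    rw [(e.symm i).2, zero_mul, add_zero] at h1
    simp only [hD, ite_and] at h1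
    rw [sum_fin_castLE hle] at h1
    rw [Finset.sum_filter, ← h1]
    refine Finset.sum_congr rfl fun j _ => ?_
    simp only [hiff, Fin.val_castLE]
  refine ⟨?_, hsumT⟩
  set F := Finset.univ.filter (fun j : Fin (3 * m) =>
      e ⟨L (Fin.castLE hle j) (Fin.castLE hle j), hdiag _ j.2⟩ = i) with hF
  -- `T / 4 < a j < T / 2` summed over the class forces `2 < #F < 4`.
  have hlow : F.card * (T + 1) ≤ 4 * T := by
    rw [← hsumT, Finset.mul_sum, hsumT, ← smul_eq_mul]
    exact Finset.card_nsmul_le_sum _ _ _ fun j _ => (ha j j.2).1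
  have hup : 2 * T + F.card ≤ F.card * T := by
    have : ∑ j ∈ F, (2 * a (j : ℕ) + 1) ≤ F.card • T :=
      Finset.sum_le_card_nsmul _ _ _ fun j _ => (ha j j.2).2
    rw [Finset.sum_add_distrib, ← Finset.mul_sum, hsumT] at this
    simpa using this
  have h3 : F.card < 4 := by
    by_contra! h
    have := Nat.mul_le_mul_right (T + 1) h
    omega
  have h4 : 2 < F.card := by
    by_contra! h
    have := Nat.mul_le_mul_right T h
    have h0 : F.card = 0 := by omega
    rw [h0] at hup
    omega
  omega

/-- A Latin square in which agents `0, …, m - 1` take the diagonal according to `f` and each of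
the other `5m` agents takes one cell of value `T`. -/
theorem exists_latin_of_partition (m T : ℕ) (hm : 3 ≤ m) (a : ℕ → ℕ)
    (hsum : ∑ j ∈ Finset.range (3 * m), a j = m * T)
    (w : Fin (6 * m) → Fin (6 * m) → ℕ)
    (hw : ∀ j k, w j k =
      if (j : ℕ) = (k : ℕ) ∧ (j : ℕ) < 3 * m then a (j : ℕ)
      else if (j : ℕ) = 3 * m - 2 ∧ (k : ℕ) < 2 * m + 1 then T
      else if (j : ℕ) = 3 * m - 1 ∧ (k : ℕ) < 3 * m - 1 then T
      else 0) (f : Fin (3 * m) → Fin m)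
    (hf : ∀ i : Fin m, ∑ j ∈ Finset.univ.filter (fun j => f j = i), a (j : ℕ) = T) :
    ∃ L : Fin (6 * m) → Fin (6 * m) → Fin (6 * m),
      (∀ x y y', L x y = L x y' → y = y') ∧ (∀ y x x', L x y = L x' y → x = x') ∧
      ∀ i, ∑ j, ∑ k, (if L j k = i then w j k else 0) = T := by
  have hle : 3 * m ≤ 6 * m := by omega
  set H : Finset (Fin (6 * m)) := Finset.univ.filter (fun x => (x : ℕ) < 3 * m) with hHdef
  have hHmem : ∀ x, x ∈ H ↔ (x : ℕ) < 3 * m := by simp [hHdef]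
  have hHcard : H.card = 3 * m := by
    rw [hHdef, Finset.card_filter, sum_fin_lt hle (fun _ => 1)]; simp
  set S : Finset (Fin (6 * m) × Fin (6 * m)) := Finset.univ.filter (fun p =>
    ((p.1 : ℕ) = p.2 ∧ (p.1 : ℕ) < 3 * m) ∨ ((p.1 : ℕ) = 3 * m - 2 ∧ (p.2 : ℕ) < 2 * m + 1) ∨
    ((p.1 : ℕ) = 3 * m - 1 ∧ (p.2 : ℕ) < 3 * m - 1)) with hSdef
  have hSmem : ∀ j k : Fin (6 * m), (j, k) ∈ S ↔
    ((j : ℕ) = k ∧ (j : ℕ) < 3 * m) ∨ ((j : ℕ) = 3 * m - 2 ∧ (k : ℕ) < 2 * m + 1) ∨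
    ((j : ℕ) = 3 * m - 1 ∧ (k : ℕ) < 3 * m - 1) := by simp [hSdef]
  -- Agents `m, …, 3m` take the `T`-cells of item `3m - 2` and agents `3m + 1, …, 6m - 1` those of
  -- item `3m - 1`; agents below `m` take the diagonal.
  set g : ℕ → ℕ → ℕ := fun j k =>
    if h : j = k ∧ j < 3 * m then (f ⟨j, h.2⟩ : ℕ)
    else if j = 3 * m - 2 then m + k else 3 * m + 1 + k with hg
  have hg1 : ∀ j (h : j < 3 * m), g j j = f ⟨j, h⟩ := fun j h => by simp [hg, h]
  have hg2 : ∀ k, k < 2 * m + 1 → g (3 * m - 2) k = m + k := fun k hk => by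
    have : ¬ (3 * m - 2 = k ∧ 3 * m - 2 < 3 * m) := by omega
    simp only [hg]
    rw [dif_neg this, if_true]
  have hg3 : ∀ k, k < 3 * m - 1 → g (3 * m - 1) k = 3 * m + 1 + k := fun k hk => by
    have h1 : ¬ (3 * m - 1 = k ∧ 3 * m - 1 < 3 * m) := by omega
    have h2 : ¬ (3 * m - 1 = 3 * m - 2) := by omega
    simp only [hg]
    rw [dif_neg h1, if_neg h2]
  set A : Fin (6 * m) × Fin (6 * m) → Fin (6 * m) := fun p =>
    if h : g p.1 p.2 < 6 * m then ⟨g p.1 p.2, h⟩ else ⟨0, by omega⟩ with hA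
  have hAval : ∀ j k, (j, k) ∈ S → (A (j, k) : ℕ) = g j k := by
    intro j k h
    have : g j k < 6 * m := by
      rcases (hSmem j k).1 h with ⟨h1, h2⟩ | ⟨h1, h2⟩ | ⟨h1, h2⟩
      · rw [← h1, hg1 _ h2]
        have := (f ⟨j, h2⟩).2
        omega
      · rw [h1, hg2 _ h2]; omega
      · rw [h1, hg3 _ h2]; omega
    simp [hA, this]
  have hprop : ProperOn S A := by
    rintro ⟨j, k⟩ hp ⟨j', k'⟩ hq hor h
    have h : g j k = g j' k' := by rw [← hAval _ _ hp, ← hAval _ _ hq, h]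
    simp only [Fin.ext_iff] at hor
    rw [Prod.mk.injEq, Fin.ext_iff, Fin.ext_iff]
    rcases (hSmem j k).1 hp with ⟨h1, h2⟩ | ⟨h1, h2⟩ | ⟨h1, h2⟩ <;>
      rcases (hSmem j' k').1 hq with ⟨h1', h2'⟩ | ⟨h1', h2'⟩ | ⟨h1', h2'⟩
    · omega
    · rw [← h1, hg1 _ h2, h1', hg2 _ h2'] at h
      have := (f ⟨j, h2⟩).2
      omega
    · rw [← h1, hg1 _ h2, h1', hg3 _ h2'] at h
      have := (f ⟨j, h2⟩).2
      omega
    · rw [← h1', hg1 _ h2', h1, hg2 _ h2] at h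
      have := (f ⟨j', h2'⟩).2
      omega
    · rw [h1, hg2 _ h2, h1', hg2 _ h2'] at h
      omega
    · rw [h1, hg2 _ h2, h1', hg3 _ h2'] at h
      omega
    · rw [← h1', hg1 _ h2', h1, hg3 _ h2] at h
      have := (f ⟨j', h2'⟩).2
      omega
    · rw [h1, hg3 _ h2, h1', hg2 _ h2'] at h
      omega
    · rw [h1, hg3 _ h2, h1', hg3 _ h2'] at h
      omega
  have hSH : S ⊆ H ×ˢ H := by
    rintro ⟨j, k⟩ h
    rw [Finset.mem_product, hHmem, hHmem]
    have := (hSmem j k).1 h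
    simp only
    omega
  obtain ⟨B, hB1, hB2⟩ := exists_greedy_fill H (by rw [hHcard, Fintype.card_fin]; ring) S hSH A hprop
  obtain ⟨L, hL1, hL2, hL3⟩ := exists_latin_extension H
    (by rw [Finset.card_compl, hHcard, Fintype.card_fin]; omega) (fun x y => B (x, y))
    (fun x hx y hy y' hy' h => congrArg Prod.snd (hB1 (x, y) (Finset.mk_mem_product hx hy) (x, y')
      (Finset.mk_mem_product hx hy') (Or.inl rfl) h))
    (fun y hy x hx x' hx' h => congrArg Prod.fst (hB1 (x, y) (Finset.mk_mem_product hx hy) (x', y)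
      (Finset.mk_mem_product hx' hy) (Or.inr rfl) h))
  have hLval : ∀ j k, (j, k) ∈ S → (L j k : ℕ) = g j k := by
    intro j k h
    obtain ⟨hj, hk⟩ := Finset.mem_product.1 (hSH h)
    rw [hL3 j hj k hk, hB2 _ h, hAval _ _ h]
  refine ⟨L, hL1, hL2, ?_⟩
  set V : Fin (6 * m) → ℕ := fun i => ∑ j, ∑ k, (if L j k = i then w j k else 0) with hVdef
  have hcell : ∀ i j k, L j k = i → w j k = T → T ≤ V i := by
    intro i j k h1 h2
    calc T = if L j k = i then w j k else 0 := by rw [if_pos h1, h2]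
      _ ≤ ∑ k, if L j k = i then w j k else 0 :=
        Finset.single_le_sum (f := fun k => if L j k = i then w j k else 0)
          (fun _ _ => Nat.zero_le _) (Finset.mem_univ k)
      _ ≤ V i := Finset.single_le_sum (f := fun j => ∑ k, if L j k = i then w j k else 0)
          (fun _ _ => Nat.zero_le _) (Finset.mem_univ j)
  have hge : ∀ i, T ≤ V i := by
    intro i
    by_cases h1 : (i : ℕ) < m
    · rw [hVdef]
      simp only
      rw [sum_split m T hm a w hw ⟨3 * m - 2, by omega⟩ ⟨3 * m - 1, by omega⟩ rfl rfl
        (fun j k => L j k = i)]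
      refine le_trans (le_of_eq ?_) (Nat.le_add_right _ _)
      simp only [ite_and]
      rw [sum_fin_castLE hle, ← hf ⟨i, h1⟩, Finset.sum_filter]
      refine Finset.sum_congr rfl fun j _ => ?_
      have h2 := hLval (Fin.castLE hle j) (Fin.castLE hle j)
        ((hSmem _ _).2 (Or.inl ⟨rfl, j.2⟩))
      rw [Fin.val_castLE, hg1 _ j.2] at h2
      simp only [Fin.ext_iff, h2, Fin.val_castLE]
    · by_cases h2 : (i : ℕ) < 3 * m + 1
      · have hS := (hSmem ⟨3 * m - 2, by omega⟩ ⟨i - m, by omega⟩).2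
          (Or.inr (Or.inl ⟨rfl, by simp only; omega⟩))
        refine hcell i ⟨3 * m - 2, by omega⟩ ⟨i - m, by omega⟩ ?_ ?_
        · rw [Fin.ext_iff, hLval _ _ hS]
          simp only
          rw [hg2 _ (by omega)]; omega
        · rw [hw]
          refine (if_neg ?_).trans (if_pos ⟨rfl, ?_⟩) <;> simp only <;> omega
      · have hi := i.2
        have hS := (hSmem ⟨3 * m - 1, by omega⟩ ⟨i - (3 * m + 1), by omega⟩).2
          (Or.inr (Or.inr ⟨rfl, by simp only; omega⟩))
        refine hcell i ⟨3 * m - 1, by omega⟩ ⟨i - (3 * m + 1), by omega⟩ ?_ ?_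
        · rw [Fin.ext_iff, hLval _ _ hS]
          simp only
          rw [hg3 _ (by omega)]; omega
        · rw [hw]
          refine (if_neg ?_).trans ((if_neg ?_).trans (if_pos ⟨rfl, ?_⟩)) <;> simp only <;> omega
  -- Every bundle is worth at least the average `T`, hence exactly `T`.
  have htot : ∑ _i : Fin (6 * m), T = ∑ i, V i := by
    rw [total_value m T hm a hsum w hw L]; simp
  intro i
  exact ((Finset.sum_eq_sum_iff_of_le fun i _ => hge i).1 htot i (Finset.mem_univ i)).symm

/-- for the 3-Partition reduction instance of order `6m` (0-based
indexing: `a l` for `l < 3m` is `a_{l+1}`, paper item `3m-1` is index `3m-2`,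
paper item `3m` is index `3m-1`), an envy-free complete allocation exists iff
`[3m]` can be partitioned into `m` triples each summing to `T`. -/
theorem stmt_14 (m T : ℕ) (hm : 3 ≤ m) (hT : 0 < T) (a : ℕ → ℕ)
    (ha_pos : ∀ j, j < 3 * m → 0 < a j)
    (ha : ∀ j, j < 3 * m → T < 4 * a j ∧ 2 * a j < T)
    (hsum : ∑ j ∈ Finset.range (3 * m), a j = m * T)
    (v : Fin (6 * m) → Fin (6 * m) → Fin (6 * m) → ℕ)
    (hv : ∀ i j k, v i j k =
      if (j : ℕ) = (k : ℕ) ∧ (j : ℕ) < 3 * m then a (j : ℕ)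
      else if (j : ℕ) = 3 * m - 2 ∧ (k : ℕ) < 2 * m + 1 then T
      else if (j : ℕ) = 3 * m - 1 ∧ (k : ℕ) < 3 * m - 1 then T
      else 0) :
    (∃ A : Finset (Fin (6 * m) × Fin (6 * m) × Fin (6 * m)),
        IsCompleteAlloc (6 * m) A ∧ EF v A) ↔
    (∃ f : Fin (3 * m) → Fin m, ∀ i : Fin m,
        (Finset.univ.filter (fun j => f j = i)).card = 3 ∧
        ∑ j ∈ Finset.univ.filter (fun j => f j = i), a (j : ℕ) = T) := by
  have i₀ : Fin (6 * m) := ⟨0, by omega⟩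
  have hvi : ∀ i, v i = v i₀ := fun i => by funext j k; rw [hv, hv]
  constructor
  · rintro ⟨A, hA, hEF⟩
    obtain ⟨L, hL⟩ := exists_array_of_complete A hA
    refine exists_partition_of_envyFree m T hm hT a ha_pos ha hsum (v i₀) (hv i₀) L fun i i' => ?_
    have h := hEF i i'
    rwa [val_bundle_eq A L hL, val_bundle_eq A L hL, hvi i] at h
  · rintro ⟨f, hf⟩
    obtain ⟨L, h1, h2, hT⟩ := exists_latin_of_partition m T hm a hsum (v i₀) (hv i₀) f fun i => (hf i).2
    obtain ⟨A, hA, hL⟩ := exists_complete_of_array L h1 h2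
    refine ⟨A, hA, fun i i' => ?_⟩
    rw [val_bundle_eq A L hL, val_bundle_eq A L hL, hvi i, hT, hT]
end

section
/- Let m ≥ 3 and let a_1, …, a_{3m}, T be positive integers with T/4 < a_j < T/2 for all j and ∑_{j=1}^{3m} a_j = mT. Define an LSA instance of order n = 6m with identical valuations: v_{ijk} = a_j if j = k ≤ 3m; otherwise v_{ijk} = T if j = 3m−1 and k ≤ 2m+1; otherwise v_{ijk} = T if j = 3m and k ≤ 3m−1; otherwise v_{ijk} = 0. Then there exists an equitable (EQ) complete allocation if and only if there exists a partition of [3m] into m triples S_1, …, S_m with ∑_{j∈S_i} a_j = T for each i ∈ [m]. -/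
/-- Equitable. -/
def EQ {n : ℕ} (v : Fin n → Fin n → Fin n → ℕ)
    (A : Finset (Fin n × Fin n × Fin n)) : Prop :=
  ∀ i i', val v i (bundle A i) = val v i' (bundle A i')

/-! ### Decomposition of regular bipartite graphs -/

open Finset in
/-- A `d`-regular bipartite graph, given by the neighbourhoods `N x`, decomposes into `d` perfect
matchings `c k`. -/
lemma exists_matching_decomposition_s15 {X Y : Type*} [Fintype X] [Fintype Y] [DecidableEq X]
    [DecidableEq Y] (hXY : Fintype.card X = Fintype.card Y) (d : ℕ) (N : X → Finset Y)
    (hX : ∀ x, (N x).card = d) (hY : ∀ y, (univ.filter fun x => y ∈ N x).card = d) :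
    ∃ c : Fin d → X → Y, (∀ k, Function.Injective (c k)) ∧ (∀ k x, c k x ∈ N x) ∧
      ∀ x, Function.Injective fun k => c k x := by
  induction d generalizing N with
  | zero => exact ⟨fun k => k.elim0, fun k => k.elim0, fun k => k.elim0, fun x k => k.elim0⟩
  | succ d ih =>
    have hall : ∀ s : Finset X, s.card ≤ (s.biUnion N).card := by
      intro s
      have h1 : ∑ x ∈ s, (N x).card ≤ ∑ y ∈ s.biUnion N, (univ.filter fun x => y ∈ N x).card := by
        calc ∑ x ∈ s, (N x).card
            = ∑ x ∈ s, ((s.biUnion N).filter fun y => y ∈ N x).card := by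
              refine sum_congr rfl fun x hx => ?_
              congr 1
              ext y
              simp only [mem_filter, mem_biUnion]
              exact ⟨fun h => ⟨⟨x, hx, h⟩, h⟩, fun h => h.2⟩
          _ = ∑ y ∈ s.biUnion N, (s.filter fun x => y ∈ N x).card :=
              sum_card_bipartiteAbove_eq_sum_card_bipartiteBelow (fun x y => y ∈ N x)
          _ ≤ _ := sum_le_sum fun y _ => card_le_card (filter_subset_filter _ (subset_univ s))
      simp only [hX, hY, sum_const, smul_eq_mul] at h1
      exact Nat.le_of_mul_le_mul_right h1 d.succ_pos
    obtain ⟨g, hg, hgN⟩ := (all_card_le_biUnion_card_iff_exists_injective N).1 hall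
    have hgb : Function.Bijective g := (Fintype.bijective_iff_injective_and_card g).2 ⟨hg, hXY⟩
    obtain ⟨c, hc1, hc2, hc3⟩ := ih (fun x => (N x).erase (g x))
      (fun x => by rw [card_erase_of_mem (hgN x), hX]; rfl)
      (fun y => by
        obtain ⟨x, rfl⟩ := hgb.2 y
        have : (univ.filter fun x' => g x ∈ (N x').erase (g x'))
            = (univ.filter fun x' => g x ∈ N x').erase x := by
          ext x'
          simp only [mem_filter, mem_erase, mem_univ, true_and, ne_eq, hg.eq_iff]
          tauto
        rw [this, card_erase_of_mem (by simp [hgN]), hY]; rfl)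
    refine ⟨Fin.cons g c, fun k => ?_, fun k x => ?_, fun x => ?_⟩
    · cases k using Fin.cases with
      | zero => exact hg
      | succ k => exact hc1 k
    · cases k using Fin.cases with
      | zero => exact hgN x
      | succ k => exact mem_of_mem_erase (hc2 k x)
    · intro k k' h
      cases k using Fin.cases with
      | zero =>
        cases k' using Fin.cases with
        | zero => rfl
        | succ k' => exact absurd h.symm (ne_of_mem_erase (hc2 k' x))
      | succ k =>
        cases k' using Fin.cases with
        | zero => exact absurd h (ne_of_mem_erase (hc2 k x))
        | succ k' => exact congrArg Fin.succ (hc3 x h)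

/-! ### Completing Latin arrays -/

open Finset in
/-- A partial array on `D` without repetitions in rows or columns extends to a full one: each empty
cell sees at most `2 (r - 1)` symbols. -/
lemma exists_fill {r : ℕ} {S : Type*} [Fintype S] [DecidableEq S] (hS : Fintype.card S = 2 * r)
    (D : Finset (Fin r × Fin r)) (A : Fin r × Fin r → S)
    (hrow : ∀ p ∈ D, ∀ q ∈ D, A p = A q → p.1 = q.1 → p = q)
    (hcol : ∀ p ∈ D, ∀ q ∈ D, A p = A q → p.2 = q.2 → p = q) :
    ∃ B : Fin r × Fin r → S, (∀ p ∈ D, B p = A p) ∧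
      (∀ p q, B p = B q → p.1 = q.1 → p = q) ∧ (∀ p q, B p = B q → p.2 = q.2 → p = q) := by
  suffices H : ∀ E : Finset (Fin r × Fin r), ∃ B : Fin r × Fin r → S, (∀ p ∈ D, B p = A p) ∧
      (∀ p ∈ D ∪ E, ∀ q ∈ D ∪ E, B p = B q → p.1 = q.1 → p = q) ∧
      (∀ p ∈ D ∪ E, ∀ q ∈ D ∪ E, B p = B q → p.2 = q.2 → p = q) by
    obtain ⟨B, h1, h2, h3⟩ := H univ
    exact ⟨B, h1, fun p q => h2 p (by simp) q (by simp), fun p q => h3 p (by simp) q (by simp)⟩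
  intro E
  induction E using Finset.induction_on with
  | empty => exact ⟨A, fun _ _ => rfl, by simpa using hrow, by simpa using hcol⟩
  | insert x E _ ih =>
    obtain ⟨B, h1, h2, h3⟩ := ih
    by_cases hx : x ∈ D ∪ E
    · have : D ∪ insert x E = D ∪ E := by
        rw [union_insert, insert_eq_of_mem hx]
      rw [this]
      exact ⟨B, h1, h2, h3⟩
    -- a symbol avoiding all other entries of `B` in the row and column of `x`, arbitrary ones included
    obtain ⟨s, hs⟩ : ∃ s, s ∉ ((univ.erase x.2).image fun k => B (x.1, k)) ∪
        ((univ.erase x.1).image fun i => B (i, x.2)) := by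
      by_contra! hcon
      have hle := card_union_le ((univ.erase x.2).image fun k => B (x.1, k))
        ((univ.erase x.1).image fun i => B (i, x.2))
      rw [eq_univ_of_forall hcon, card_univ, hS] at hle
      have e1 := card_image_le (s := univ.erase x.2) (f := fun k => B (x.1, k))
      have e2 := card_image_le (s := univ.erase x.1) (f := fun i => B (i, x.2))
      rw [card_erase_of_mem (mem_univ _), card_univ, Fintype.card_fin] at e1 e2
      have := x.1.pos
      omega
    simp only [mem_union, mem_image, mem_erase, mem_univ, and_true, not_or, not_exists,
      not_and] at hs
    have key1 : ∀ q, q ≠ x → x.1 = q.1 → s ≠ B q := by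
      rintro ⟨i, k⟩ hq h e
      refine hs.1 k (fun hk => hq (Prod.ext h.symm hk)) ?_
      rw [e]; simp only at h; rw [h]
    have key2 : ∀ q, q ≠ x → x.2 = q.2 → s ≠ B q := by
      rintro ⟨i, k⟩ hq h e
      refine hs.2 i (fun hk => hq (Prod.ext hk h.symm)) ?_
      rw [e]; simp only at h; rw [h]
    have hmem : ∀ p ∈ D ∪ insert x E, p ≠ x → p ∈ D ∪ E := by
      intro p hp hpx
      simp only [mem_union, mem_insert] at hp ⊢
      tauto
    refine ⟨Function.update B x s, fun p hp => ?_, ?_, ?_⟩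
    · rw [Function.update_of_ne, h1 p hp]
      rintro rfl
      exact hx (mem_union_left _ hp)
    · intro p hp q hq h hr
      by_cases hpx : p = x <;> by_cases hqx : q = x
      · rw [hpx, hqx]
      · subst hpx
        rw [Function.update_self, Function.update_of_ne hqx] at h
        exact absurd h (key1 q hqx hr)
      · subst hqx
        rw [Function.update_self, Function.update_of_ne hpx] at h
        exact absurd h.symm (key1 p hpx hr.symm)
      · rw [Function.update_of_ne hpx, Function.update_of_ne hqx] at h
        exact h2 p (hmem p hp hpx) q (hmem q hq hqx) h hr
    · intro p hp q hq h hr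
      by_cases hpx : p = x <;> by_cases hqx : q = x
      · rw [hpx, hqx]
      · subst hpx
        rw [Function.update_self, Function.update_of_ne hqx] at h
        exact absurd h (key2 q hqx hr)
      · subst hqx
        rw [Function.update_self, Function.update_of_ne hpx] at h
        exact absurd h.symm (key2 p hpx hr.symm)
      · rw [Function.update_of_ne hpx, Function.update_of_ne hqx] at h
        exact h3 p (hmem p hp hpx) q (hmem q hq hqx) h hr

open Finset in
/-- An `r × 2r` Latin rectangle (columns indexed by `K`) extends to a Latin square: the graph
joining a column to its missing symbols is `r`-regular. -/
lemma exists_latin_square_of_rectangle {r : ℕ} {S K : Type*} [Fintype S] [DecidableEq S]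
    [Fintype K] [DecidableEq K]
    (hS : Fintype.card S = 2 * r) (hK : Fintype.card K = 2 * r) (R : Fin r → K → S)
    (hrow : ∀ i, Function.Injective (R i)) (hcol : ∀ k, Function.Injective fun i => R i k) :
    ∃ L : Fin r ⊕ Fin r → K → S, (∀ i k, L (.inl i) k = R i k) ∧
      (∀ j, Function.Injective (L j)) ∧ ∀ k, Function.Injective fun j => L j k := by
  have hbij : ∀ i, Function.Bijective (R i) := fun i =>
    (Fintype.bijective_iff_injective_and_card _).2 ⟨hrow i, hK.trans hS.symm⟩
  obtain ⟨c, hc1, hc2, hc3⟩ := exists_matching_decomposition_s15 (hK.trans hS.symm) r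
    (fun k => (univ.image fun i => R i k)ᶜ)
    (fun k => by
      rw [card_compl, card_image_of_injective _ (hcol k), hS, card_univ, Fintype.card_fin]
      omega)
    (fun s => by
      choose g hg using fun i => (hbij i).2 s
      have hgi : Function.Injective g := fun i i' h => by
        refine hcol (g i) ?_
        simp only
        rw [hg i, h, hg i']
      have : (univ.filter fun k => s ∈ (univ.image fun i => R i k)ᶜ) = (univ.image g)ᶜ := by
        ext k
        simp only [mem_filter, mem_univ, true_and, mem_compl, mem_image, not_exists]
        refine forall_congr' fun i => not_congr ⟨fun h => ?_, fun h => ?_⟩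
        · exact hrow i ((hg i).trans h.symm)
        · rw [← h, hg]
      rw [this, card_compl, card_image_of_injective _ hgi, hK, card_univ, Fintype.card_fin]
      omega)
  have hne : ∀ i j k, R i k ≠ c j k := fun i j k h => by
    have := hc2 j k
    rw [mem_compl] at this
    exact this (mem_image.2 ⟨i, mem_univ _, h⟩)
  refine ⟨Sum.elim R c, fun _ _ => rfl, ?_, ?_⟩
  · rintro (i | j)
    · exact hrow i
    · exact hc1 j
  · rintro k (i | j) (i' | j') h
    · exact congrArg _ (hcol k h)
    · exact absurd h (hne _ _ _)
    · exact absurd h.symm (hne _ _ _)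
    · exact congrArg _ (hc3 k h)

open Finset in
/-- An `r × r` array on `2r` symbols without repetitions in rows or columns is the corner of a Latin
square of order `2r`. -/
lemma exists_latin_extension_s15 {r : ℕ} {S : Type*} [Fintype S] [DecidableEq S]
    (hS : Fintype.card S = 2 * r) (A : Fin r → Fin r → S)
    (hrow : ∀ i, Function.Injective (A i)) (hcol : ∀ k, Function.Injective fun i => A i k) :
    ∃ L : Fin r ⊕ Fin r → Fin r ⊕ Fin r → S, (∀ i k, L (.inl i) (.inl k) = A i k) ∧
      (∀ j, Function.Injective (L j)) ∧ ∀ k, Function.Injective fun j => L j k := by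
  have hXS : Fintype.card (Fin r ⊕ Fin r) = Fintype.card S := by simp [hS]; omega
  -- A row is joined to the symbols missing from it, a column to the symbols occurring in it.
  -- A symbol with `t` occurrences has degree `(r - t) + t`, so the graph is `r`-regular.
  obtain ⟨c, hc1, hc2, hc3⟩ := exists_matching_decomposition_s15 hXS r
    (Sum.elim (fun i => (univ.image (A i))ᶜ) (fun k => univ.image fun i => A i k))
    (by
      rintro (i | k)
      · simp only [Sum.elim_inl]
        rw [card_compl, card_image_of_injective _ (hrow i), hS, card_univ, Fintype.card_fin]
        omega
      · simp only [Sum.elim_inr]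
        rw [card_image_of_injective _ (hcol k), card_univ, Fintype.card_fin])
    (fun s => by
      rw [card_filter, Fintype.sum_sum_type, ← card_filter, ← card_filter]
      simp only [Sum.elim_inl, Sum.elim_inr, mem_compl, mem_image, mem_univ, true_and]
      have h1 := card_filter_add_card_filter_not (s := (univ : Finset (Fin r)))
        (fun i => ∃ k, A i k = s)
      have h2 : (univ.filter fun i => ∃ k, A i k = s).card
          = (univ.filter fun k => ∃ i, A i k = s).card := by
        have ha : (univ.filter fun i => ∃ k, A i k = s)
            = (univ.filter fun p : Fin r × Fin r => A p.1 p.2 = s).image Prod.fst := by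
          ext i; simp
        have hb : (univ.filter fun k => ∃ i, A i k = s)
            = (univ.filter fun p : Fin r × Fin r => A p.1 p.2 = s).image Prod.snd := by
          ext k; simp
        rw [ha, hb, card_image_of_injOn, card_image_of_injOn]
        · rintro ⟨i, k⟩ hp ⟨i', k'⟩ hq h
          simp only [coe_filter, mem_univ, true_and, Set.mem_ofPred_eq] at hp hq h
          subst h
          exact Prod.ext (hcol k (hp.trans hq.symm)) rfl
        · rintro ⟨i, k⟩ hp ⟨i', k'⟩ hq h
          simp only [coe_filter, mem_univ, true_and, Set.mem_ofPred_eq] at hp hq h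
          subst h
          exact Prod.ext rfl (hrow i (hp.trans hq.symm))
      rw [card_univ, Fintype.card_fin] at h1
      omega)
  have hne : ∀ i j k, A i k ≠ c j (.inl i) := fun i j k h => by
    have := hc2 j (.inl i)
    rw [Sum.elim_inl, mem_compl] at this
    exact this (mem_image.2 ⟨k, mem_univ _, h⟩)
  obtain ⟨L, hL, hL1, hL2⟩ := exists_latin_square_of_rectangle hS (hXS.trans hS)
    (fun i => Sum.elim (A i) (fun j => c j (.inl i)))
    (by
      rintro i (k | j) (k' | j') h
      · exact congrArg _ (hrow i h)
      · exact absurd h (hne _ _ _)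
      · exact absurd h.symm (hne _ _ _)
      · exact congrArg _ (hc3 _ h))
    (by
      rintro (k | j)
      · exact hcol k
      · intro i i' h
        exact Sum.inl_injective (hc1 j h))
  exact ⟨L, fun i k => hL i _, hL1, hL2⟩

/-! ### Allocations as Latin arrays -/

/-- The allocation giving item `j` in round `k` to agent `L (j, k)`. -/
def allocOf {n : ℕ} (L : Fin n × Fin n → Fin n) : Finset (Fin n × Fin n × Fin n) :=
  Finset.univ.image fun p => (L p, p)

lemma mem_allocOf {n : ℕ} {L : Fin n × Fin n → Fin n} {i j k : Fin n} :
    (i, j, k) ∈ allocOf L ↔ L (j, k) = i := by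
  simp only [allocOf, Finset.mem_image, Finset.mem_univ, true_and, Prod.mk.injEq]
  constructor
  · rintro ⟨p, h1, rfl⟩; exact h1
  · intro h; exact ⟨(j, k), h, rfl⟩

lemma bundle_allocOf {n : ℕ} (L : Fin n × Fin n → Fin n) (i : Fin n) :
    bundle (allocOf L) i = Finset.univ.filter fun p => L p = i := by
  ext ⟨j, k⟩
  simp only [bundle, Finset.mem_image, Finset.mem_filter, Finset.mem_univ, true_and]
  constructor
  · rintro ⟨⟨i', j', k'⟩, ⟨h1, h2⟩, h3⟩
    rw [mem_allocOf] at h1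
    simp only [Prod.mk.injEq] at h2 h3
    rw [← h3.1, ← h3.2, h1, h2]
  · intro h
    exact ⟨(i, j, k), ⟨mem_allocOf.2 h, rfl⟩, rfl⟩

lemma exists_eq_allocOf {n : ℕ} {A : Finset (Fin n × Fin n × Fin n)} (hA : IsCompleteAlloc n A) :
    ∃ L, A = allocOf L := by
  obtain ⟨⟨-, -, h⟩, hcard⟩ := hA
  have hinj : Set.InjOn (Prod.snd : Fin n × Fin n × Fin n → _) A := by
    rintro ⟨i, j, k⟩ hp ⟨i', j', k'⟩ hq e
    simp only [Prod.mk.injEq] at e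
    obtain ⟨rfl, rfl⟩ := e
    rw [h i i' j k hp hq]
  have himg : A.image Prod.snd = Finset.univ := by
    rw [← Finset.card_eq_iff_eq_univ, Finset.card_image_of_injOn hinj, hcard]
    simp [sq]
  have hex : ∀ p : Fin n × Fin n, ∃ i, (i, p) ∈ A := by
    intro p
    have hp : p ∈ A.image Prod.snd := by rw [himg]; exact Finset.mem_univ _
    obtain ⟨⟨i, q⟩, hq, rfl⟩ := Finset.mem_image.1 hp
    exact ⟨i, hq⟩
  choose L hL using hex
  refine ⟨L, ?_⟩
  ext ⟨i, j, k⟩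
  rw [mem_allocOf]
  exact ⟨fun hi => h _ _ j k (hL (j, k)) hi, fun e => e ▸ hL (j, k)⟩

lemma isCompleteAlloc_allocOf {n : ℕ} {L : Fin n × Fin n → Fin n}
    (hrow : ∀ j, Function.Injective fun k => L (j, k))
    (hcol : ∀ k, Function.Injective fun j => L (j, k)) : IsCompleteAlloc n (allocOf L) := by
  refine ⟨⟨?_, ?_, ?_⟩, ?_⟩
  · intro i j k k' h h'
    rw [mem_allocOf] at h h'
    exact hrow j (h.trans h'.symm)
  · intro i j j' k h h'
    rw [mem_allocOf] at h h'
    exact hcol k (h.trans h'.symm)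
  · intro i i' j k h h'
    rw [mem_allocOf] at h h'
    exact h.symm.trans h'
  · rw [allocOf, Finset.card_image_of_injective _ (fun p q h => (Prod.ext_iff.1 h).2)]
    simp [sq]

/-! ### The cells of positive value -/

/-- Index type of the cells worth `T`. -/
abbrev BigIdx (m : ℕ) : Type := Fin (2 * m + 1) ⊕ Fin (3 * m - 1)

lemma card_bigIdx {m : ℕ} (hm : 3 ≤ m) : Fintype.card (BigIdx m) = 5 * m := by
  simp; omega

/-- The cells of positive value, all in the top-left corner: the diagonal, followed by those
worth `T`. -/
def cornerCell {m : ℕ} (hm : 3 ≤ m) : Fin (3 * m) ⊕ BigIdx m → Fin (3 * m) × Fin (3 * m) :=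
  Sum.elim (fun l => (l, l)) (Sum.elim
    (fun k => (⟨3 * m - 2, by omega⟩, Fin.castLE (by omega) k))
    (fun k => (⟨3 * m - 1, by omega⟩, Fin.castLE (by omega) k)))

/-- The value of each cell in `cornerCell`. -/
def cellValue (m T : ℕ) (a : ℕ → ℕ) : Fin (3 * m) ⊕ BigIdx m → ℕ :=
  Sum.elim (fun l => a l) (fun _ => T)

lemma cornerCell_injective {m : ℕ} (hm : 3 ≤ m) : Function.Injective (cornerCell hm) := by
  rintro (l | k | k) (l' | k' | k') h <;>
    simp [cornerCell, Prod.ext_iff, Fin.ext_iff] at h ⊢ <;> omega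

/-- The inclusion of the top-left corner. -/
def cornerIncl (m : ℕ) (p : Fin (3 * m) × Fin (3 * m)) : Fin (6 * m) × Fin (6 * m) :=
  (Fin.castLE (by omega) p.1, Fin.castLE (by omega) p.2)

lemma cornerIncl_injective (m : ℕ) : Function.Injective (cornerIncl m) := by
  rintro ⟨p, q⟩ ⟨p', q'⟩ h
  simpa [cornerIncl] using h

/-- The value of a bundle is the value of the cells from `cornerCell` in it. -/
lemma val_eq_sum {m T : ℕ} (hm : 3 ≤ m) {a : ℕ → ℕ}
    {v : Fin (6 * m) → Fin (6 * m) → Fin (6 * m) → ℕ}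
    (hv : ∀ i j k, v i j k =
      if (j : ℕ) = (k : ℕ) ∧ (j : ℕ) < 3 * m then a (j : ℕ)
      else if (j : ℕ) = 3 * m - 2 ∧ (k : ℕ) < 2 * m + 1 then T
      else if (j : ℕ) = 3 * m - 1 ∧ (k : ℕ) < 3 * m - 1 then T
      else 0) (L : Fin (6 * m) × Fin (6 * m) → Fin (6 * m)) (i : Fin (6 * m)) :
    val v i (bundle (allocOf L) i) =
      ∑ c, if L (cornerIncl m (cornerCell hm c)) = i then cellValue m T a c else 0 := by
  rw [bundle_allocOf, val, Finset.sum_filter]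
  symm
  refine Fintype.sum_of_injective (fun c => cornerIncl m (cornerCell hm c))
    ((cornerIncl_injective m).comp (cornerCell_injective hm)) _ _ ?_ ?_
  · rintro ⟨j, k⟩ hp
    refine ite_eq_right_iff.2 fun _ => ?_
    rw [hv]
    split_ifs with h1 h2 h3
    · refine absurd ⟨.inl ⟨j, h1.2⟩, ?_⟩ hp
      simpa [cornerIncl, cornerCell, Fin.ext_iff] using h1.1
    · refine absurd ⟨.inr (.inl ⟨k, h2.2⟩), ?_⟩ hp
      simpa [cornerIncl, cornerCell, Fin.ext_iff] using h2.1.symm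
    · refine absurd ⟨.inr (.inr ⟨k, h3.2⟩), ?_⟩ hp
      simpa [cornerIncl, cornerCell, Fin.ext_iff] using h3.1.symm
    · rfl
  · intro c
    refine if_congr Iff.rfl ?_ rfl
    rw [hv]
    rcases c with l | k | k
    · simp [cornerIncl, cornerCell, cellValue]
    · have := k.isLt
      simp only [cornerIncl, cornerCell, cellValue, Sum.elim_inl, Sum.elim_inr, Fin.val_castLE,
        true_and]
      rw [if_neg (by omega), if_pos (by omega)]
    · have := k.isLt
      simp only [cornerIncl, cornerCell, cellValue, Sum.elim_inr, Fin.val_castLE, true_and]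
      rw [if_neg (by omega), if_neg (by omega), if_pos (by omega)]

/-- Since `T/4 < a_l < T/2`, only triples can have sum `T`. -/
lemma card_eq_three {ι : Type*} {s : Finset ι} {b : ι → ℕ} {T : ℕ} (hT : 0 < T)
    (hb : ∀ l ∈ s, T < 4 * b l ∧ 2 * b l < T) (h : ∑ l ∈ s, b l = T) : s.card = 3 := by
  have hne : s.Nonempty := by
    rw [Finset.nonempty_iff_ne_empty]
    rintro rfl
    simp at h
    omega
  have h1 : ∑ _l ∈ s, T < ∑ l ∈ s, 4 * b l :=
    Finset.sum_lt_sum_of_nonempty hne fun l hl => (hb l hl).1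
  have h2 : ∑ l ∈ s, 2 * b l < ∑ _l ∈ s, T :=
    Finset.sum_lt_sum_of_nonempty hne fun l hl => (hb l hl).2
  rw [← Finset.mul_sum, h, Finset.sum_const, smul_eq_mul] at h1 h2
  have h3 := Nat.lt_of_mul_lt_mul_right h1
  have h4 := Nat.lt_of_mul_lt_mul_right h2
  omega

open Finset in
/-- An assignment `s` of the valuable cells to `6m` agents giving each of them value `T` comes from
a partition into triples. -/
lemma exists_triples {m T : ℕ} (hm : 3 ≤ m) (hT : 0 < T) {a : ℕ → ℕ}
    (ha : ∀ j, j < 3 * m → T < 4 * a j ∧ 2 * a j < T)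
    (s : Fin (3 * m) ⊕ BigIdx m → Fin (6 * m))
    (hs : ∀ i, (∑ c, if s c = i then cellValue m T a c else 0) = T) :
    ∃ f : Fin (3 * m) → Fin m, ∀ i : Fin m,
      (univ.filter (fun j => f j = i)).card = 3 ∧
      ∑ j ∈ univ.filter (fun j => f j = i), a (j : ℕ) = T := by
  -- two distinct cells of the same agent are worth at most `T` together
  have hpair : ∀ c c', c ≠ c' → s c = s c' → cellValue m T a c + cellValue m T a c' ≤ T := by
    intro c c' hne he
    calc cellValue m T a c + cellValue m T a c'
        = ∑ x ∈ {c, c'}, if s x = s c then cellValue m T a x else 0 := by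
          rw [sum_pair hne]; simp [he]
      _ ≤ _ := sum_le_univ_sum_of_nonneg fun _ => Nat.zero_le _
      _ = T := hs (s c)
  have hinj : Function.Injective fun t => s (.inr t) := by
    intro t t' h
    by_contra hne
    have := hpair (.inr t) (.inr t') (fun h => hne (Sum.inr_injective h)) h
    simp only [cellValue, Sum.elim_inr] at this
    omega
  have hdisj : ∀ l t, s (.inl l) ≠ s (.inr t) := by
    intro l t h
    have := hpair (.inl l) (.inr t) Sum.inl_ne_inr h
    simp only [cellValue, Sum.elim_inr, Sum.elim_inl] at this
    have := ha l l.isLt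
    omega
  have hcard : ((univ.image fun t => s (.inr t))ᶜ).card = m := by
    rw [card_compl, card_image_of_injective _ hinj, card_univ, card_bigIdx hm, Fintype.card_fin]
    omega
  let e := ((univ.image fun t => s (.inr t))ᶜ).equivFinOfCardEq hcard
  have hmem : ∀ l, s (.inl l) ∈ (univ.image fun t => s (.inr t))ᶜ := by
    intro l
    simp only [mem_compl, mem_image, mem_univ, true_and, not_exists]
    exact fun t h => hdisj l t h.symm
  refine ⟨fun l => e ⟨s (.inl l), hmem l⟩, fun i => ?_⟩
  have hsumT : ∑ j ∈ univ.filter (fun j => e ⟨s (.inl j), hmem j⟩ = i), a (j : ℕ) = T := by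
    rw [← hs (e.symm i), Fintype.sum_sum_type, sum_filter]
    have h0 : (∑ t, if s (.inr t) = (e.symm i : Fin (6 * m))
        then cellValue m T a (.inr t) else 0) = 0 := by
      refine sum_eq_zero fun t _ => if_neg fun h => ?_
      have := (e.symm i).2
      rw [mem_compl] at this
      exact this (mem_image.2 ⟨t, mem_univ _, h⟩)
    rw [h0, add_zero]
    refine sum_congr rfl fun l _ => if_congr ?_ rfl rfl
    rw [← Equiv.eq_symm_apply, Subtype.ext_iff]
  exact ⟨card_eq_three hT (fun l _ => ha l l.isLt) hsumT, hsumT⟩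

/-- for the 3-Partition reduction instance of order `6m` (0-based
indexing: `a l` for `l < 3m` is `a_{l+1}`, paper item `3m-1` is index `3m-2`,
paper item `3m` is index `3m-1`), an equitable (EQ) complete allocation exists iff
`[3m]` can be partitioned into `m` triples each summing to `T`. -/
theorem stmt_15 (m T : ℕ) (hm : 3 ≤ m) (hT : 0 < T) (a : ℕ → ℕ)
    (ha_pos : ∀ j, j < 3 * m → 0 < a j)
    (ha : ∀ j, j < 3 * m → T < 4 * a j ∧ 2 * a j < T)
    (hsum : ∑ j ∈ Finset.range (3 * m), a j = m * T)
    (v : Fin (6 * m) → Fin (6 * m) → Fin (6 * m) → ℕ)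
    (hv : ∀ i j k, v i j k =
      if (j : ℕ) = (k : ℕ) ∧ (j : ℕ) < 3 * m then a (j : ℕ)
      else if (j : ℕ) = 3 * m - 2 ∧ (k : ℕ) < 2 * m + 1 then T
      else if (j : ℕ) = 3 * m - 1 ∧ (k : ℕ) < 3 * m - 1 then T
      else 0) :
    (∃ A : Finset (Fin (6 * m) × Fin (6 * m) × Fin (6 * m)),
        IsCompleteAlloc (6 * m) A ∧ EQ v A) ↔
    (∃ f : Fin (3 * m) → Fin m, ∀ i : Fin m,
        (Finset.univ.filter (fun j => f j = i)).card = 3 ∧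
        ∑ j ∈ Finset.univ.filter (fun j => f j = i), a (j : ℕ) = T) := by
  constructor
  · rintro ⟨A, hA, hEQ⟩
    obtain ⟨L, rfl⟩ := exists_eq_allocOf hA
    refine exists_triples hm hT ha (fun c => L (cornerIncl m (cornerCell hm c))) fun i => ?_
    -- all agents get the same value, and the values add up to `6 * m * T`
    have htot : ∑ i', val v i' (bundle (allocOf L) i') = 6 * m * T := by
      simp_rw [val_eq_sum hm hv]
      rw [Finset.sum_comm]
      simp only [Finset.sum_ite_eq, Finset.mem_univ, if_true]
      rw [Fintype.sum_sum_type]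
      simp only [cellValue, Sum.elim_inl, Sum.elim_inr, Finset.sum_const, Finset.card_univ,
        smul_eq_mul]
      rw [card_bigIdx hm, Fin.sum_univ_eq_sum_range (fun l => a l), hsum]
      ring
    rw [Finset.sum_congr rfl fun i' _ => hEQ i' i, Finset.sum_const, Finset.card_univ,
      Fintype.card_fin, smul_eq_mul] at htot
    rw [← val_eq_sum hm hv]
    exact Nat.eq_of_mul_eq_mul_left (by omega) htot
  · rintro ⟨f, hf⟩
    obtain ⟨e⟩ : Nonempty (Fin m ⊕ BigIdx m ≃ Fin (6 * m)) :=
      ⟨Fintype.equivFinOfCardEq (by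
        rw [Fintype.card_sum, card_bigIdx hm, Fintype.card_fin]; omega)⟩
    -- agents `e (inl b)` get the triples, agents `e (inr t)` the cells worth `T`
    let s : Fin (3 * m) ⊕ BigIdx m → Fin (6 * m) := fun c => e (Sum.map f id c)
    have hext : ∀ c, Function.extend (cornerCell hm) s (fun _ => ⟨0, by omega⟩) (cornerCell hm c)
        = s c := fun c => (cornerCell_injective hm).extend_apply _ _ c
    -- only diagonal cells share an agent, and those differ in both coordinates
    have hs : ∀ c c', s c = s c' → ((cornerCell hm c).1 = (cornerCell hm c').1 ∨
        (cornerCell hm c).2 = (cornerCell hm c').2) → c = c' := by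
      rintro (l | t) (l' | t') h hr
      · rcases hr with hr | hr <;> exact congrArg _ hr
      · exact absurd (e.injective h) (by simp)
      · exact absurd (e.injective h) (by simp)
      · exact congrArg _ (Sum.inr_injective (e.injective h))
    obtain ⟨B, hB, hB1, hB2⟩ := exists_fill (r := 3 * m) (S := Fin (6 * m))
      (by rw [Fintype.card_fin]; omega) (Finset.univ.image (cornerCell hm))
      (Function.extend (cornerCell hm) s (fun _ => ⟨0, by omega⟩))
      (by
        simp only [Finset.mem_image, Finset.mem_univ, true_and]
        rintro _ ⟨c, rfl⟩ _ ⟨c', rfl⟩ h hr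
        rw [hext, hext] at h
        rw [hs c c' h (.inl hr)])
      (by
        simp only [Finset.mem_image, Finset.mem_univ, true_and]
        rintro _ ⟨c, rfl⟩ _ ⟨c', rfl⟩ h hr
        rw [hext, hext] at h
        rw [hs c c' h (.inr hr)])
    obtain ⟨L, hL, hL1, hL2⟩ := exists_latin_extension_s15 (r := 3 * m) (S := Fin (6 * m))
      (by rw [Fintype.card_fin]; omega) (fun i k => B (i, k))
      (fun i k k' h => (Prod.ext_iff.1 (hB1 _ _ h rfl)).2)
      (fun k i i' h => (Prod.ext_iff.1 (hB2 _ _ h rfl)).1)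
    let E : Fin (3 * m) ⊕ Fin (3 * m) ≃ Fin (6 * m) :=
      finSumFinEquiv.trans (finCongr (by omega))
    have hE : ∀ (x : Fin (3 * m)) (h : 3 * m ≤ 6 * m), E.symm (Fin.castLE h x) = .inl x := by
      intro x h
      rw [Equiv.symm_apply_eq]
      ext
      simp [E]
    refine ⟨allocOf fun p => L (E.symm p.1) (E.symm p.2), isCompleteAlloc_allocOf
      (fun j => (hL1 (E.symm j)).comp E.symm.injective)
      (fun k => (hL2 (E.symm k)).comp E.symm.injective), ?_⟩
    suffices H : ∀ i, val v i (bundle (allocOf fun p => L (E.symm p.1) (E.symm p.2)) i) = T from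
      fun i i' => (H i).trans (H i').symm
    intro i
    rw [val_eq_sum hm hv]
    have hLs : ∀ c, L (E.symm (cornerIncl m (cornerCell hm c)).1)
        (E.symm (cornerIncl m (cornerCell hm c)).2) = s c := by
      intro c
      simp only [cornerIncl]
      rw [hE, hE, hL, ← hext c]
      exact hB _ (Finset.mem_image_of_mem _ (Finset.mem_univ _))
    simp only [hLs]
    obtain ⟨b | t, rfl⟩ := e.surjective i
    · rw [Fintype.sum_sum_type]
      simp only [s, e.apply_eq_iff_eq, cellValue, Sum.map_inl, Sum.map_inr, Sum.elim_inl,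
        Sum.elim_inr, Sum.inl.injEq, reduceCtorEq, if_false, Finset.sum_const_zero, add_zero]
      rw [← Finset.sum_filter]
      exact (hf b).2
    · rw [Fintype.sum_sum_type]
      simp [s, cellValue]
end
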